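/- Let θ ∈ (0, 1/2] be such that θ⁻¹ ≥ 2 is an integer, and let U : S_{T[θ,S₁]} → S_{T[θ,S₁]} be a surjective isometry of the unit sphere of T[θ, S₁]. Then there exist a sequence (ε_i)_{i=1}^∞ with values in {−1, 1} and a permutation π of {1, 2, …, θ⁻¹} such that U(e_i) = ε_i e_{π(i)} for 1 ≤ i ≤ θ⁻¹ and U(e_i) = ε_i e_i for i > θ⁻¹. -/

import Mathlib

open scoped BigOperators

noncomputable section

/-- Projection of a finitely supported vector onto the coordinates in `E`. -/
def tsProj (E : Finset ℕ+) (x : ℕ+ →₀ ℝ) : ℕ+ →₀ ℝ :=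
  x.filter fun i => i ∈ E

/-- The Schreier families `S_n` on the positive integers:
`S₁` consists of the sets `F` with `|F| ≤ min F` (together with `∅`), and `S_{n+1}`
consists of unions `F₁ ∪ ⋯ ∪ F_d` of nonempty members `F₁ < ⋯ < F_d` of `S_n`
with `d ≤ min F₁` (together with `∅`). -/
def Schreier : ℕ → Set (Finset ℕ+)
  | 0 => {F | F.card ≤ 1}
  | 1 => {F | ∀ a ∈ F, F.card ≤ (a : ℕ)}
  | n + 2 =>
      {F | F = ∅ ∨
        ∃ (d : ℕ) (G : Fin d → Finset ℕ+),
          0 < d ∧ (∀ i, G i ∈ Schreier (n + 1)) ∧ (∀ i, (G i).Nonempty) ∧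
          (∀ i j : Fin d, i < j → ∀ a ∈ G i, ∀ b ∈ G j, a < b) ∧
          (∀ i, ∀ a ∈ G i, d ≤ (a : ℕ)) ∧ F = Finset.univ.biUnion G}

/-- A tuple of nonempty finite sets `E 0 < E 1 < ⋯` whose set of minima belongs to `S`. -/
def TsAdmissible (S : Set (Finset ℕ+)) {d : ℕ} (E : Fin d → Finset ℕ+) : Prop :=
  (∀ i, (E i).Nonempty) ∧
  (∀ i j : Fin d, i < j → ∀ a ∈ E i, ∀ b ∈ E j, a < b) ∧
  ∃ μ : Fin d → ℕ+, (∀ i, IsLeast (↑(E i) : Set ℕ+) (μ i)) ∧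
    Finset.univ.image μ ∈ S

/-- The iterated norms `‖·‖_m` in the construction of the Tsirelson norm:
`‖x‖₀` is the supremum norm and
`‖x‖_{m+1} = max(‖x‖_m, sup{θ ∑ᵢ ‖Eᵢ x‖_m : E₁ < ⋯ < E_d, {min Eᵢ} ∈ S})`. -/
def tnormAux (θ : ℝ) (S : Set (Finset ℕ+)) : ℕ → (ℕ+ →₀ ℝ) → ℝ
  | 0, x => ⨆ i, |x i|
  | m + 1, x =>
      max (tnormAux θ S m x)
        (sSup {r : ℝ | ∃ (d : ℕ) (E : Fin d → Finset ℕ+), TsAdmissible S E ∧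
          r = θ * ∑ i, tnormAux θ S m (tsProj (E i) x)})

/-- The Tsirelson norm `‖x‖_{θ,S} = sup_m ‖x‖_m` on `c₀₀`. -/
def tnorm (θ : ℝ) (S : Set (Finset ℕ+)) (x : ℕ+ →₀ ℝ) : ℝ :=
  ⨆ m : ℕ, tnormAux θ S m x

/-- `X`, together with the sequence `e` of unit vectors, is (a realization of) the
Tsirelson space `T[θ, S_n]`: a Banach space containing `c₀₀` isometrically
(w.r.t. the Tsirelson norm) as a dense subspace, in which `(e i)` is a
(1-unconditional) basis, i.e. every `x` has a unique expansion `x = ∑ᵢ aᵢ eᵢ`. -/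
structure IsTsirelsonSpace (θ : ℝ) (n : ℕ) (X : Type*) [NormedAddCommGroup X]
    [NormedSpace ℝ X] (e : ℕ+ → X) : Prop where
  complete : CompleteSpace X
  norm_embed : ∀ a : ℕ+ →₀ ℝ, ‖a.sum fun i c => c • e i‖ = tnorm θ (Schreier n) a
  dense_embed : DenseRange fun a : ℕ+ →₀ ℝ => a.sum fun i c => c • e i
  expansion : ∀ x : X, ∃! a : ℕ+ → ℝ, HasSum (fun i => a i • e i) x

section TsFinite

variable {θ : ℝ} {S : Set (Finset ℕ+)}

lemma tsProj_apply (E : Finset ℕ+) (x : ℕ+ →₀ ℝ) (i : ℕ+) :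
    tsProj E x i = if i ∈ E then x i else 0 := by
  simp [tsProj, Finsupp.filter_apply]

def tsL1 (x : ℕ+ →₀ ℝ) : ℝ := ∑ j ∈ x.support, |x j|

lemma tsL1_nonneg (x : ℕ+ →₀ ℝ) : 0 ≤ tsL1 x := Finset.sum_nonneg fun _ _ => abs_nonneg _

lemma tsL1_eq (x : ℕ+ →₀ ℝ) (s : Finset ℕ+) (h : ∀ j, x j ≠ 0 → j ∈ s) :
    tsL1 x = ∑ j ∈ s, |x j| := by
  apply Finset.sum_subset
  · intro j hj; exact h j (by simpa using hj)
  · intro j _ hj; simpa using hj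

lemma ts_abs_le_L1 (x : ℕ+ →₀ ℝ) (i : ℕ+) : |x i| ≤ tsL1 x := by
  by_cases h : x i = 0
  · rw [h, abs_zero]; exact tsL1_nonneg x
  · exact Finset.single_le_sum (f := fun j => |x j|) (fun _ _ => abs_nonneg _) (by simpa using h)

/-- successive sets. -/
def TsSucc {d : ℕ} (E : Fin d → Finset ℕ+) : Prop :=
  ∀ i j : Fin d, i < j → ∀ a ∈ E i, ∀ b ∈ E j, a < b

lemma TsSucc.eq {d : ℕ} {E : Fin d → Finset ℕ+} (h : TsSucc E) {i j : Fin d} {a : ℕ+}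
    (hi : a ∈ E i) (hj : a ∈ E j) : i = j := by
  rcases lt_trichotomy i j with h1 | h1 | h1
  · exact absurd (h i j h1 a hi a hj) (lt_irrefl _)
  · exact h1
  · exact absurd (h j i h1 a hj a hi) (lt_irrefl _)

lemma TsSucc.sum_ite_le {d : ℕ} {E : Fin d → Finset ℕ+} (h : TsSucc E) (a : ℕ+) {c : ℝ}
    (hc : 0 ≤ c) : ∑ i, (if a ∈ E i then c else 0) ≤ c := by
  by_cases hex : ∃ i, a ∈ E i
  · obtain ⟨i, hi⟩ := hex
    rw [Finset.sum_eq_single i]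
    · simp [hi]
    · intro j _ hj
      rw [if_neg]; intro hj'; exact hj (h.eq hj' hi)
    · simp
  · push Not at hex
    simp [hex, hc]

lemma TsSucc.sum_L1_le {d : ℕ} {E : Fin d → Finset ℕ+} (h : TsSucc E) (x : ℕ+ →₀ ℝ) :
    ∑ i, tsL1 (tsProj (E i) x) ≤ tsL1 x := by
  have : ∀ i, tsL1 (tsProj (E i) x) = ∑ j ∈ x.support, (if j ∈ E i then |x j| else 0) := by
    intro i
    rw [tsL1_eq _ x.support]
    · apply Finset.sum_congr rfl; intro j _; rw [tsProj_apply]; split_ifs <;> simp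
    · intro j; rw [tsProj_apply]; split_ifs <;> simp
  simp_rw [this]
  rw [Finset.sum_comm]
  exact Finset.sum_le_sum fun j _ => h.sum_ite_le j (abs_nonneg _)

lemma tnormAux_nonneg (m : ℕ) : ∀ x : ℕ+ →₀ ℝ, 0 ≤ tnormAux θ S m x := by
  induction m with
  | zero => intro x; exact Real.iSup_nonneg fun i => abs_nonneg _
  | succ m ih => intro x; exact le_max_of_le_left (ih x)

lemma tnormAux_le_L1 (h0 : 0 < θ) (h1 : θ ≤ 1) (m : ℕ) :
    ∀ x : ℕ+ →₀ ℝ, tnormAux θ S m x ≤ tsL1 x := by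
  induction m with
  | zero => intro x; exact ciSup_le fun i => ts_abs_le_L1 x i
  | succ m ih =>
    intro x
    refine max_le (ih x) (Real.sSup_le ?_ (tsL1_nonneg x))
    rintro r ⟨d, E, hE, rfl⟩
    have h2 : ∑ i, tnormAux θ S m (tsProj (E i) x) ≤ tsL1 x :=
      (Finset.sum_le_sum fun i _ => ih _).trans (TsSucc.sum_L1_le hE.2.1 x)
    have h3 : 0 ≤ ∑ i, tnormAux θ S m (tsProj (E i) x) :=
      Finset.sum_nonneg fun i _ => tnormAux_nonneg _ _
    nlinarith

lemma tnormAux_bdd (h0 : 0 < θ) (h1 : θ ≤ 1) (m : ℕ) (x : ℕ+ →₀ ℝ) :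
    BddAbove {r : ℝ | ∃ (d : ℕ) (E : Fin d → Finset ℕ+), TsAdmissible S E ∧
          r = θ * ∑ i, tnormAux θ S m (tsProj (E i) x)} := by
  refine ⟨tsL1 x, ?_⟩
  rintro r ⟨d, E, hE, rfl⟩
  have h2 : ∑ i, tnormAux θ S m (tsProj (E i) x) ≤ tsL1 x :=
    (Finset.sum_le_sum fun i _ => tnormAux_le_L1 h0 h1 m _).trans (TsSucc.sum_L1_le hE.2.1 x)
  have h3 : 0 ≤ ∑ i, tnormAux θ S m (tsProj (E i) x) :=
    Finset.sum_nonneg fun i _ => tnormAux_nonneg _ _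
  nlinarith

lemma tnormAux_abs_le (m : ℕ) (x : ℕ+ →₀ ℝ) (i : ℕ+) : |x i| ≤ tnormAux θ S m x := by
  induction m with
  | zero =>
    refine le_ciSup (f := fun i => |x i|) ⟨tsL1 x, ?_⟩ i
    rintro r ⟨j, rfl⟩; exact ts_abs_le_L1 x j
  | succ m ih => exact le_max_of_le_left ih

lemma tnormAux_mono (h0 : 0 < θ) (h1 : θ ≤ 1) (m : ℕ) :
    ∀ x y : ℕ+ →₀ ℝ, (∀ i, |x i| ≤ |y i|) → tnormAux θ S m x ≤ tnormAux θ S m y := by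
  induction m with
  | zero => intro x y h; exact ciSup_le fun i => (h i).trans (tnormAux_abs_le (θ := θ) (S := S) 0 y i)
  | succ m ih =>
    intro x y h
    refine max_le (le_max_of_le_left (ih x y h)) (Real.sSup_le ?_ (tnormAux_nonneg (m+1) y))
    rintro r ⟨d, E, hE, rfl⟩
    refine le_trans ?_ (le_max_of_le_right (le_csSup (tnormAux_bdd h0 h1 m y) ⟨d, E, hE, rfl⟩))
    refine mul_le_mul_of_nonneg_left (Finset.sum_le_sum fun i _ => ih _ _ fun j => ?_) h0.le
    rw [tsProj_apply, tsProj_apply]; split_ifs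
    · exact h j
    · simp

lemma tnormAux_monotone (x : ℕ+ →₀ ℝ) : Monotone fun m => tnormAux θ S m x :=
  monotone_nat_of_le_succ fun _ => le_max_left _ _

lemma tnorm_bdd (h0 : 0 < θ) (h1 : θ ≤ 1) (x : ℕ+ →₀ ℝ) :
    BddAbove (Set.range fun m => tnormAux θ S m x) := by
  refine ⟨tsL1 x, ?_⟩
  rintro r ⟨m, rfl⟩; exact tnormAux_le_L1 h0 h1 m x

lemma tnormAux_le_tnorm (h0 : 0 < θ) (h1 : θ ≤ 1) (m : ℕ) (x : ℕ+ →₀ ℝ) :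
    tnormAux θ S m x ≤ tnorm θ S x := le_ciSup (tnorm_bdd h0 h1 x) m

lemma tnorm_abs_le (h0 : 0 < θ) (h1 : θ ≤ 1) (x : ℕ+ →₀ ℝ) (i : ℕ+) :
    |x i| ≤ tnorm θ S x := (tnormAux_abs_le 0 x i).trans (tnormAux_le_tnorm h0 h1 0 x)

lemma tnorm_nonneg (h0 : 0 < θ) (h1 : θ ≤ 1) (x : ℕ+ →₀ ℝ) : 0 ≤ tnorm θ S x :=
  (abs_nonneg _).trans (tnorm_abs_le h0 h1 x 1)

lemma tnorm_le_L1 (h0 : 0 < θ) (h1 : θ ≤ 1) (x : ℕ+ →₀ ℝ) : tnorm θ S x ≤ tsL1 x :=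
  ciSup_le fun m => tnormAux_le_L1 h0 h1 m x

lemma tnorm_mono (h0 : 0 < θ) (h1 : θ ≤ 1) (x y : ℕ+ →₀ ℝ) (h : ∀ i, |x i| ≤ |y i|) :
    tnorm θ S x ≤ tnorm θ S y :=
  ciSup_le fun m => (tnormAux_mono h0 h1 m x y h).trans (tnormAux_le_tnorm h0 h1 m y)

lemma tnorm_adm (h0 : 0 < θ) (h1 : θ ≤ 1) (x : ℕ+ →₀ ℝ) {d : ℕ} {E : Fin d → Finset ℕ+}
    (hE : TsAdmissible S E) : θ * ∑ i, tnorm θ S (tsProj (E i) x) ≤ tnorm θ S x := by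
  have ht : Filter.Tendsto (fun m => θ * ∑ i, tnormAux θ S m (tsProj (E i) x)) Filter.atTop
      (nhds (θ * ∑ i, tnorm θ S (tsProj (E i) x))) := by
    refine Filter.Tendsto.const_mul _ (tendsto_finsetSum _ fun i _ => ?_)
    exact tendsto_atTop_ciSup (tnormAux_monotone _) (tnorm_bdd h0 h1 _)
  refine le_of_tendsto' ht fun m => ?_
  refine le_trans ?_ (tnormAux_le_tnorm h0 h1 (m+1) x)
  exact le_max_of_le_right (le_csSup (tnormAux_bdd h0 h1 m x) ⟨d, E, hE, rfl⟩)

lemma tnorm_le (h0 : 0 < θ) (h1 : θ ≤ 1) (x : ℕ+ →₀ ℝ) (C : ℝ) (hc : ∀ i, |x i| ≤ C)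
    (hE : ∀ (d : ℕ) (E : Fin d → Finset ℕ+), TsAdmissible S E →
      θ * ∑ i, tnorm θ S (tsProj (E i) x) ≤ C) : tnorm θ S x ≤ C := by
  refine ciSup_le fun m => ?_
  induction m with
  | zero => exact ciSup_le hc
  | succ m ih =>
    refine max_le ih (Real.sSup_le ?_ ((abs_nonneg _).trans (hc 1)))
    rintro r ⟨d, E, hE', rfl⟩
    refine le_trans ?_ (hE d E hE')
    exact mul_le_mul_of_nonneg_left
      (Finset.sum_le_sum fun i _ => tnormAux_le_tnorm h0 h1 m _) h0.le

/-- X5 -/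
lemma tnorm_le_max (h0 : 0 < θ) (h1 : θ ≤ 1) (x : ℕ+ →₀ ℝ) (C : ℝ) (hc : ∀ i, |x i| ≤ C)
    (hl : θ * tsL1 x ≤ C) : tnorm θ S x ≤ C := by
  refine tnorm_le h0 h1 x C hc fun d E hE => le_trans ?_ hl
  refine mul_le_mul_of_nonneg_left ?_ h0.le
  exact (Finset.sum_le_sum fun i _ => tnorm_le_L1 h0 h1 _).trans (TsSucc.sum_L1_le hE.2.1 x)

lemma tnorm_single (h0 : 0 < θ) (h1 : θ ≤ 1) (a : ℕ+) (t : ℝ) :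
    tnorm θ S (Finsupp.single a t) = |t| := by
  apply le_antisymm
  · refine (tnorm_le_L1 h0 h1 _).trans ?_
    rw [tsL1_eq _ {a}]
    · simp
    · intro j hj; by_contra h; simp at h; exact hj (Finsupp.single_eq_of_ne h)
  · simpa using tnorm_abs_le (S := S) h0 h1 (Finsupp.single a t) a

/-- X4 -/
lemma tnorm_ge (h0 : 0 < θ) (h1 : θ ≤ 1) (x : ℕ+ →₀ ℝ) (B : Finset ℕ+) (hB : B ∈ S) :
    θ * ∑ b ∈ B, |x b| ≤ tnorm θ S x := by
  let o := B.orderEmbOfFin rfl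
  have hadm : TsAdmissible S (fun i : Fin B.card => ({o i} : Finset ℕ+)) := by
    refine ⟨fun i => by simp, ?_, o, ?_, ?_⟩
    · intro i j hij a ha b hb
      simp only [Finset.mem_singleton] at ha hb
      rw [ha, hb]; exact o.strictMono hij
    · intro i; simp
    · have : Finset.univ.image o = B := Finset.image_orderEmbOfFin_univ B rfl
      rwa [this]
  refine le_trans ?_ (tnorm_adm h0 h1 x hadm)
  refine mul_le_mul_of_nonneg_left ?_ h0.le
  have : ∑ b ∈ B, |x b| = ∑ i, |x (o i)| := by
    conv_lhs => rw [← Finset.image_orderEmbOfFin_univ B rfl]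
    rw [Finset.sum_image]
    intro i _ j _ h; exact o.injective h
  rw [this]
  refine Finset.sum_le_sum fun i _ => ?_
  have := tnorm_abs_le (S := S) h0 h1 (tsProj {o i} x) (o i)
  simpa [tsProj_apply] using this

/-- X2 -/
lemma tnorm_add_single (h0 : 0 < θ) (h1 : θ ≤ 1)
    (htri : ∀ x y : ℕ+ →₀ ℝ, tnorm θ S (x + y) ≤ tnorm θ S x + tnorm θ S y)
    (x : ℕ+ →₀ ℝ) (a : ℕ+) (t : ℝ) :
    tnorm θ S (x + Finsupp.single a t) ≤ max |x a + t| (tnorm θ S x + θ * |t|) := by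
  refine tnorm_le h0 h1 _ _ ?_ ?_
  · intro i
    by_cases h : i = a
    · subst h; simp
    · apply le_max_of_le_right
      have : (x + Finsupp.single a t) i = x i := by simp [Finsupp.single_eq_of_ne h]
      rw [this]
      have := tnorm_abs_le (S := S) h0 h1 x i
      have := mul_nonneg h0.le (abs_nonneg t)
      linarith
  · intro d E hE
    apply le_max_of_le_right
    have key : ∀ i, tnorm θ S (tsProj (E i) (x + Finsupp.single a t)) ≤
        tnorm θ S (tsProj (E i) x) + if a ∈ E i then |t| else 0 := by
      intro i
      have he : tsProj (E i) (x + Finsupp.single a t) =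
          tsProj (E i) x + Finsupp.single a (if a ∈ E i then t else 0) := by
        ext j
        rw [Finsupp.add_apply, tsProj_apply, tsProj_apply, Finsupp.add_apply]
        by_cases h : j = a
        · subst h; simp only [Finsupp.single_eq_same]; split_ifs <;> simp
        · simp only [Finsupp.single_eq_of_ne h]; split_ifs <;> simp
      rw [he]
      refine (htri _ _).trans ?_
      rw [tnorm_single h0 h1]
      split_ifs <;> simp
    have h2 := TsSucc.sum_ite_le hE.2.1 a (abs_nonneg t)
    have h3 := tnorm_adm h0 h1 x hE
    have h4 : ∑ i, tnorm θ S (tsProj (E i) (x + Finsupp.single a t)) ≤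
        ∑ i, tnorm θ S (tsProj (E i) x) + |t| := by
      refine (Finset.sum_le_sum fun i _ => key i).trans ?_
      rw [Finset.sum_add_distrib]; linarith
    calc _ ≤ θ * (∑ i, tnorm θ S (tsProj (E i) x) + |t|) := mul_le_mul_of_nonneg_left h4 h0.le
      _ ≤ _ := by rw [mul_add]; linarith

lemma adm_card_le {d : ℕ} {E : Fin d → Finset ℕ+} (hE : TsAdmissible (Schreier 1) E)
    {i : Fin d} {p : ℕ+} (hp : p ∈ E i) : d ≤ (p : ℕ) := by
  obtain ⟨-, hs, μ, hμ, hS⟩ := hE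
  have hinj : Function.Injective μ := by
    intro i j hij
    exact TsSucc.eq (E := E) hs (hμ i).1 (by rw [hij]; exact (hμ j).1)
  have h1 := hS (μ i) (Finset.mem_image_of_mem _ (Finset.mem_univ _))
  rw [Finset.card_image_of_injective _ hinj] at h1
  simp only [Finset.card_univ, Fintype.card_fin] at h1
  have : μ i ≤ p := (hμ i).2 hp
  exact h1.trans (by exact_mod_cast this)

/-- X7 -/
lemma tnorm_linf {k : ℕ} (h0 : 0 < θ) (h1 : θ ≤ 1) (hk : θ * k ≤ 1) (x : ℕ+ →₀ ℝ) (p : ℕ+)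
    (hp : (p : ℕ) ≤ k) :
    tnorm θ (Schreier 1) x ≤ max |x p| (tnorm θ (Schreier 1) (x.erase p)) := by
  set C := max |x p| (tnorm θ (Schreier 1) (x.erase p)) with hC
  have hC0 : 0 ≤ C := le_max_of_le_left (abs_nonneg _)
  refine ciSup_le fun m => ?_
  induction m with
  | zero =>
    refine ciSup_le fun i => ?_
    by_cases h : i = p
    · subst h; exact le_max_left _ _
    · apply le_max_of_le_right
      have := tnorm_abs_le (S := Schreier 1) h0 h1 (x.erase p) i
      rwa [Finsupp.erase_ne h] at this
  | succ m ih =>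
    refine max_le ih (Real.sSup_le ?_ hC0)
    rintro r ⟨d, E, hE, rfl⟩
    by_cases hex : ∃ i, p ∈ E i
    · obtain ⟨i, hi⟩ := hex
      have hd : d ≤ k := (adm_card_le hE hi).trans hp
      have h2 : ∑ i, tnormAux θ (Schreier 1) m (tsProj (E i) x) ≤ d * C := by
        refine (Finset.sum_le_sum (g := fun _ => C) fun i _ => ?_).trans (by simp)
        refine le_trans (tnormAux_mono h0 h1 m _ x fun j => ?_) ih
        rw [tsProj_apply]; split_ifs <;> simp
      have hd' : (d : ℝ) ≤ k := by exact_mod_cast hd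
      calc _ ≤ θ * (d * C) := mul_le_mul_of_nonneg_left h2 h0.le
        _ ≤ θ * (k * C) := by gcongr
        _ = (θ * k) * C := by ring
        _ ≤ 1 * C := by gcongr
        _ = C := one_mul _
    · push Not at hex
      apply le_max_of_le_right
      refine le_trans ?_ (tnorm_adm h0 h1 (x.erase p) hE)
      refine mul_le_mul_of_nonneg_left (Finset.sum_le_sum fun i _ => ?_) h0.le
      have : tsProj (E i) x = tsProj (E i) (x.erase p) := by
        ext j
        rw [tsProj_apply, tsProj_apply]
        split_ifs with hj
        · rw [Finsupp.erase_ne]; rintro rfl; exact hex i hj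
        · rfl
      rw [this]
      exact tnormAux_le_tnorm h0 h1 _ _

/-- X6 -/
lemma tnorm_flat (h0 : 0 < θ) (h1 : θ ≤ 1 / 2) (x : ℕ+ →₀ ℝ) (B : Finset ℕ+) (m : ℕ)
    (hm : 1 ≤ θ * m) (hB : B.card = m + 1) (p : ℕ+) (hpB : p ∈ B) (hp : (p : ℕ) ≤ m)
    (hx : ∀ i, |x i| ≤ 1) (hsupp : ∀ i, x i ≠ 0 → i ∈ B) :
    tnorm θ (Schreier 1) x ≤ θ * m := by
  have h1' : θ ≤ 1 := by linarith
  refine tnorm_le h0 h1' _ _ (fun i => (hx i).trans hm) ?_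
  intro d E hE
  refine mul_le_mul_of_nonneg_left ?_ h0.le
  set n : Fin d → ℕ := fun i => (B.filter fun j => j ∈ E i).card with hn
  have hL1 : ∀ i, tsL1 (tsProj (E i) x) ≤ n i := by
    intro i
    rw [tsL1_eq _ (B.filter fun j => j ∈ E i)]
    · refine (Finset.sum_le_sum (g := fun _ => (1:ℝ)) fun j _ => ?_).trans (by simp [hn])
      rw [tsProj_apply]; split_ifs
      · exact hx j
      · simp
    · intro j hj
      rw [tsProj_apply] at hj
      split_ifs at hj with h
      · simp [h, hsupp j hj]
      · exact absurd rfl hj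
  have hT1 : ∀ i, tnorm θ (Schreier 1) (tsProj (E i) x) ≤ n i :=
    fun i => (tnorm_le_L1 h0 h1' _).trans (hL1 i)
  have hT2 : ∀ i, 2 ≤ n i → tnorm θ (Schreier 1) (tsProj (E i) x) ≤ n i - 1 := by
    intro i hi
    have hi' : (2:ℝ) ≤ n i := by exact_mod_cast hi
    refine tnorm_le_max h0 h1' _ _ (fun j => ?_) ?_
    · rw [tsProj_apply]; split_ifs
      · linarith [hx j]
      · simp; linarith
    · have := hL1 i
      have := tsL1_nonneg (tsProj (E i) x)
      nlinarith
  have hsum : ∑ i, n i = ((Finset.univ.biUnion fun i => B.filter fun j => j ∈ E i)).card := by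
    rw [Finset.card_biUnion]
    intro i _ j _ hij
    rw [Function.onFun, Finset.disjoint_left]
    intro a ha hb
    simp only [Finset.mem_filter] at ha hb
    exact hij (TsSucc.eq (E := E) hE.2.1 ha.2 hb.2)
  have hsub : (Finset.univ.biUnion fun i => B.filter fun j => j ∈ E i) ⊆ B := by
    intro a; simp; tauto
  by_cases hlt : ∑ i, n i ≤ m
  · refine (Finset.sum_le_sum fun i _ => hT1 i).trans ?_
    exact_mod_cast hlt
  · have heq : (Finset.univ.biUnion fun i => B.filter fun j => j ∈ E i) = B := by
      apply Finset.eq_of_subset_of_card_le hsub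
      omega
    have hs : ∑ i, n i = m + 1 := by rw [hsum, heq, hB]
    have : p ∈ (Finset.univ.biUnion fun i => B.filter fun j => j ∈ E i) := by rw [heq]; exact hpB
    simp only [Finset.mem_biUnion, Finset.mem_filter] at this
    obtain ⟨i, -, -, hi⟩ := this
    have hd := (adm_card_le hE hi).trans hp
    obtain ⟨i0, hi0⟩ : ∃ i, 2 ≤ n i := by
      by_contra hcon
      push Not at hcon
      have : ∑ i, n i ≤ ∑ i : Fin d, 1 := Finset.sum_le_sum fun i _ => by have := hcon i; omega
      simp at this
      omega
    have hs' : (∑ i, (n i : ℝ)) = m + 1 := by exact_mod_cast hs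
    rw [← Finset.add_sum_erase _ _ (Finset.mem_univ i0)] at hs' ⊢
    have := hT2 i0 hi0
    have : ∑ i ∈ Finset.univ.erase i0, tnorm θ (Schreier 1) (tsProj (E i) x) ≤
      ∑ i ∈ Finset.univ.erase i0, (n i : ℝ) := Finset.sum_le_sum fun i _ => hT1 i
    linarith

end TsFinite

/-- The geometric facts about `T[1/k, S₁]` used in the proof. -/
structure TsFacts (k : ℕ) {X : Type*} [NormedAddCommGroup X] [NormedSpace ℝ X]
    (e : ℕ+ → X) (c : ℕ+ → X →ₗ[ℝ] ℝ) : Prop where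
  hs : ∀ x, HasSum (fun i => c i x • e i) x
  ce : ∀ i j, c i (e j) = if j = i then 1 else 0
  le : ∀ i x, |c i x| ≤ ‖x‖
  ne : ∀ i, ‖e i‖ = 1
  add_le : ∀ x a (t : ℝ), ‖x + t • e a‖ ≤ max |c a x + t| (‖x‖ + (k : ℝ)⁻¹ * |t|)
  flip : ∀ x a, ‖x - (2 * c a x) • e a‖ = ‖x‖
  ge : ∀ x (B : Finset ℕ+), (∀ b ∈ B, B.card ≤ (b : ℕ)) →
    (k : ℝ)⁻¹ * ∑ b ∈ B, |c b x| ≤ ‖x‖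
  le_max : ∀ (B : Finset ℕ+) (t : ℕ+ → ℝ) (C : ℝ), 0 ≤ C → (∀ b ∈ B, |t b| ≤ C) →
    (k : ℝ)⁻¹ * ∑ b ∈ B, |t b| ≤ C → ‖∑ b ∈ B, t b • e b‖ ≤ C
  flat : ∀ (B : Finset ℕ+) (t : ℕ+ → ℝ) (m : ℕ) (p : ℕ+), k ≤ m → B.card = m + 1 → p ∈ B →
    (p : ℕ) ≤ m → (∀ b ∈ B, |t b| ≤ 1) → ‖∑ b ∈ B, t b • e b‖ ≤ (k : ℝ)⁻¹ * m
  linf : ∀ x (p : ℕ+) (t : ℝ), (p : ℕ) ≤ k → ‖x + t • e p‖ ≤ max |c p x + t| ‖x‖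

section TsToFacts

variable {k : ℕ} {X : Type*} [NormedAddCommGroup X] [NormedSpace ℝ X] {e : ℕ+ → X}

lemma ts_sum_single_apply (B : Finset ℕ+) (t : ℕ+ → ℝ) (j : ℕ+) :
    (∑ b ∈ B, Finsupp.single b (t b)) j = if j ∈ B then t j else 0 := by
  rw [Finsupp.finsetSum_apply]
  simp [Finsupp.single_apply]

lemma tsFacts_of (hk : 2 ≤ k) (hX : IsTsirelsonSpace ((k : ℝ)⁻¹) 1 X e) :
    ∃ c : ℕ+ → X →ₗ[ℝ] ℝ, TsFacts k e c := by
  have hk' : (2:ℝ) ≤ k := by exact_mod_cast hk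
  have h0 : 0 < (k : ℝ)⁻¹ := by positivity
  have hhalf : (k : ℝ)⁻¹ ≤ 1 / 2 := by
    rw [one_div]; exact inv_anti₀ (by norm_num) hk'
  have h1 : (k : ℝ)⁻¹ ≤ 1 := by linarith
  have hkk : (k : ℝ)⁻¹ * k = 1 := by field_simp
  set θ := (k : ℝ)⁻¹ with hθ
  let L := Finsupp.linearCombination ℝ e
  have hL : ∀ a, ‖L a‖ = tnorm θ (Schreier 1) a := fun a => hX.norm_embed a
  have hLd : DenseRange L := hX.dense_embed
  have hLs : ∀ i t, L (Finsupp.single i t) = t • e i := fun i t => by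
    simp [L, Finsupp.linearCombination_single]
  have htri : ∀ x y : ℕ+ →₀ ℝ, tnorm θ (Schreier 1) (x + y) ≤
      tnorm θ (Schreier 1) x + tnorm θ (Schreier 1) y := by
    intro x y; rw [← hL, ← hL, ← hL, map_add]; exact norm_add_le _ _
  choose a ha hau using hX.expansion
  have ha : ∀ x, HasSum (fun i => a x i • e i) x := ha
  have hau : ∀ x b, HasSum (fun i => b i • e i) x → b = a x := hau
  let c : ℕ+ → X →ₗ[ℝ] ℝ := fun i =>
    { toFun := fun x => a x i
      map_add' := by
        intro x y
        have := hau (x + y) (fun i => a x i + a y i) (by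
          simpa [add_smul] using (ha x).add (ha y))
        exact (congrFun this i).symm
      map_smul' := by
        intro r x
        have := hau (r • x) (fun i => r * a x i) (by
          simpa [mul_smul] using (ha x).const_smul r)
        exact (congrFun this i).symm }
  have hc : ∀ i x, c i x = a x i := fun _ _ => rfl
  have hcL : ∀ (v : ℕ+ →₀ ℝ) i, c i (L v) = v i := by
    intro v i
    have : HasSum (fun i => v i • e i) (L v) := by
      have : L v = ∑ i ∈ v.support, v i • e i := by
        simp [L, Finsupp.linearCombination_apply, Finsupp.sum]
      rw [this]
      apply hasSum_sum_of_ne_finset_zero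
      intro b hb
      have : v b = 0 := by simpa using hb
      simp [this]
    exact (congrFun (hau _ _ this) i).symm
  have hle : ∀ i x, |c i x| ≤ ‖x‖ := by
    intro i x
    have ht : Filter.Tendsto (fun s => ‖∑ i ∈ s, a x i • e i‖) Filter.atTop (nhds ‖x‖) :=
      (ha x).norm
    refine ge_of_tendsto ht ?_
    filter_upwards [Filter.eventually_ge_atTop ({i} : Finset ℕ+)] with s hs
    have : ∑ i ∈ s, a x i • e i = L (∑ i ∈ s, Finsupp.single i (a x i)) := by
      rw [map_sum]; simp [hLs]
    rw [this, hL]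
    refine le_trans ?_ (tnorm_abs_le h0 h1 _ i)
    rw [ts_sum_single_apply, if_pos (hs (by simp)), hc]
  have hcc : ∀ i, Continuous (c i) := by
    intro i
    exact AddMonoidHomClass.continuous_of_bound (c i) 1 (by intro x; simpa using hle i x)
  have hsum : ∀ (B : Finset ℕ+) (t : ℕ+ → ℝ),
      ∑ b ∈ B, t b • e b = L (∑ b ∈ B, Finsupp.single b (t b)) := by
    intro B t; rw [map_sum]; simp [hLs]
  have hl1 : ∀ (B : Finset ℕ+) (t : ℕ+ → ℝ),
      tsL1 (∑ b ∈ B, Finsupp.single b (t b)) = ∑ b ∈ B, |t b| := by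
    intro B t
    rw [tsL1_eq _ B]
    · apply Finset.sum_congr rfl; intro j hj; rw [ts_sum_single_apply, if_pos hj]
    · intro j hj; by_contra h; rw [ts_sum_single_apply, if_neg h] at hj; exact hj rfl
  have hs1 : ∀ i, e i = L (Finsupp.single i 1) := by intro i; simp [hLs]
  refine ⟨c, ha, ?_, hle, ?_, ?_, ?_, ?_, ?_, ?_, ?_⟩
  · intro i j
    rw [hs1, hcL, Finsupp.single_apply]
  · intro i
    rw [hs1, hL, tnorm_single h0 h1]; simp
  · intro x b t
    induction x using hLd.induction_on with
    | hp => exact isClosed_le (by fun_prop) (by have := hcc b; fun_prop)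
    | ih v =>
      rw [← hLs, ← map_add, hL, hL, hcL]
      exact tnorm_add_single h0 h1 htri v b t
  · intro x b
    induction x using hLd.induction_on with
    | hp => exact isClosed_eq (by have := hcc b; fun_prop) (by fun_prop)
    | ih v =>
      rw [← hLs, ← map_sub, hL, hL, hcL]
      have : ∀ i, |(v - Finsupp.single b (2 * v b)) i| = |v i| := by
        intro i
        by_cases h : i = b
        · subst h; simp; rw [← abs_neg]; congr 1; ring
        · simp [Finsupp.single_eq_of_ne h]
      exact le_antisymm (tnorm_mono h0 h1 _ _ fun i => (this i).le)
        (tnorm_mono h0 h1 _ _ fun i => (this i).ge)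
  · intro x B hB
    induction x using hLd.induction_on with
    | hp => exact isClosed_le (by fun_prop) (by fun_prop)
    | ih v =>
      simp only [hcL, hL]
      exact tnorm_ge h0 h1 v B hB
  · intro B t C hC ht hl
    rw [hsum, hL]
    refine tnorm_le_max h0 h1 _ _ (fun i => ?_) (by rw [hl1]; exact hl)
    rw [ts_sum_single_apply]; split_ifs with h
    · exact ht i h
    · simpa using hC
  · intro B t m p hkm hB hpB hp ht
    rw [hsum, hL]
    have hm : (k:ℝ) ≤ m := by exact_mod_cast hkm
    refine tnorm_flat h0 hhalf _ B m ?_ hB p hpB hp (fun i => ?_) (fun i hi => ?_)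
    · calc 1 = θ * k := hkk.symm
        _ ≤ θ * m := by gcongr
    · rw [ts_sum_single_apply]; split_ifs with h
      · exact ht i h
      · simp
    · by_contra h; rw [ts_sum_single_apply, if_neg h] at hi; exact hi rfl
  · intro x p t hp
    induction x using hLd.induction_on with
    | hp => exact isClosed_le (by fun_prop) (by have := hcc p; fun_prop)
    | ih v =>
      rw [← hLs, ← map_add, hL, hL, hcL]
      refine (tnorm_linf h0 h1 hkk.le _ p hp).trans (max_le_max (by simp) ?_)
      refine tnorm_mono h0 h1 _ _ fun i => ?_
      by_cases h : i = p
      · subst h; simp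
      · rw [Finsupp.erase_ne h]; simp [Finsupp.single_eq_of_ne h]

end TsToFacts

section TsFlat

variable {X : Type*} [NormedAddCommGroup X] [NormedSpace ℝ X]

lemma norm_comb_of_norm_add {g h : X} (hg : ‖g‖ = 1) (hh : ‖h‖ = 1) (hgh : ‖g + h‖ = 2)
    {l m : ℝ} (hl : 0 ≤ l) (hm : 0 ≤ m) : ‖l • g + m • h‖ = l + m := by
  have key : ∀ {g h : X}, ‖g‖ = 1 → ‖h‖ = 1 → ‖g + h‖ = 2 → ∀ {l m : ℝ}, 0 ≤ l → l ≤ m →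
      ‖l • g + m • h‖ = l + m := by
    intro g h hg hh hgh l m hl hlm
    apply le_antisymm
    · refine (norm_add_le _ _).trans ?_
      rw [norm_smul, norm_smul, hg, hh, Real.norm_of_nonneg hl, Real.norm_of_nonneg (hl.trans hlm)]
      simp
    · have : m • (g + h) = (l • g + m • h) + (m - l) • g := by module
      have h2 := norm_add_le (l • g + m • h) ((m - l) • g)
      rw [← this, norm_smul, norm_smul, hgh, hg, Real.norm_of_nonneg (hl.trans hlm),
        Real.norm_of_nonneg (sub_nonneg.2 hlm)] at h2
      linarith
  rcases le_total l m with h1 | h1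
  · exact key hg hh hgh hl h1
  · rw [add_comm, key hh hg (by rwa [add_comm]) hm h1, add_comm]

/-- `x` is a point of a flat piece of radius `r`. -/
structure TsFlatPt (x : X) (r : ℝ) (f : X →L[ℝ] ℝ) : Prop where
  nx : ‖x‖ = 1
  r0 : 0 < r
  fl : ∀ g h : X, ‖g‖ = 1 → ‖h‖ = 1 → ‖g - x‖ < r → ‖h - x‖ < r → ‖g + h‖ = 2
  fle : ∀ y, f y ≤ ‖y‖
  fx : f x = 1

namespace TsFlatPt
variable {x : X} {r : ℝ} {f : X →L[ℝ] ℝ}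

lemma smooth (H : TsFlatPt x r f) : ∃ ρ > 0, ∀ v, ‖v‖ < ρ → ‖x + v‖ = 1 + f v := by
  have hcont : ContinuousAt (fun v : X => ‖(‖x + v‖)⁻¹ • (x + v) - x‖) 0 := by
    have h0 : ‖x + 0‖ ≠ 0 := by simp [H.nx]
    have h1 : ContinuousAt (fun v : X => ‖x + v‖) 0 := by fun_prop
    exact (((h1.inv₀ h0).smul (by fun_prop)).sub continuousAt_const).norm
  have hev : ∀ᶠ v in nhds (0:X), ‖(‖x + v‖)⁻¹ • (x + v) - x‖ < r := by
    apply hcont.eventually_lt continuousAt_const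
    simp [H.nx, H.r0]
  rw [Metric.eventually_nhds_iff] at hev
  obtain ⟨ρ, hρ, hev⟩ := hev
  refine ⟨min ρ 1, by positivity, fun v hv => ?_⟩
  have hv1 : ‖v‖ < ρ := hv.trans_le (min_le_left _ _)
  have hv2 : ‖v‖ < 1 := hv.trans_le (min_le_right _ _)
  have ha := hev (y := v) (by simpa using hv1)
  have hb := hev (y := -v) (by simpa using hv1)
  have hpos : ∀ w : X, ‖w‖ < 1 → 0 < ‖x + w‖ := by
    intro w hw
    have := norm_sub_le (x + w) w
    simp [H.nx] at this
    linarith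
  have pa := hpos v hv2
  have pb := hpos (-v) (by simpa using hv2)
  have hn : ∀ w : X, 0 < ‖w‖ → ‖(‖w‖)⁻¹ • w‖ = 1 := by
    intro w hw; rw [norm_smul, norm_inv, norm_norm, inv_mul_cancel₀ hw.ne']
  have h2 := H.fl _ _ (hn _ pa) (hn _ pb) ha hb
  have h3 := norm_comb_of_norm_add (hn _ pa) (hn _ pb) h2 pa.le pb.le
  rw [smul_inv_smul₀ pa.ne', smul_inv_smul₀ pb.ne'] at h3
  have h4 : x + v + (x + -v) = (2:ℝ) • x := by module
  rw [h4, norm_smul, H.nx] at h3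
  have h5 := H.fle (x + v)
  have h6 := H.fle (x + -v)
  simp only [map_add, map_neg, H.fx] at h5 h6
  norm_num at h3
  apply le_antisymm <;> linarith

lemma norm_eq (H : TsFlatPt x r f) {y : X} (hy : 0 < ‖y‖) (h : ‖(‖y‖)⁻¹ • y - x‖ < r) : ‖y‖ = f y := by
  obtain ⟨ρ, hρ, hs⟩ := H.smooth
  have hn : ‖(‖y‖)⁻¹ • y‖ = 1 := by rw [norm_smul, norm_inv, norm_norm, inv_mul_cancel₀ hy.ne']
  have h2 := H.fl _ x hn H.nx h (by simpa using H.r0)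
  set s := 2 * ‖y‖ / ρ with hsdef
  have hs0 : 0 < s := by positivity
  have h3 := norm_comb_of_norm_add hn H.nx h2 hy.le hs0.le
  rw [smul_inv_smul₀ hy.ne'] at h3
  have h4 : y + s • x = s • (x + s⁻¹ • y) := by
    rw [smul_add, smul_inv_smul₀ hs0.ne', add_comm]
  have h5 : ‖s⁻¹ • y‖ < ρ := by
    rw [norm_smul, norm_inv, Real.norm_of_nonneg hs0.le, hsdef]
    field_simp
    norm_num
  rw [h4, norm_smul, hs _ h5, Real.norm_of_nonneg hs0.le, map_smul, smul_eq_mul, mul_add,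
    mul_inv_cancel_left₀ hs0.ne'] at h3
  linarith

lemma tangent (H : TsFlatPt x r f) {v : X} (hv : f v = 0) (hr : ‖v‖ < r) : ‖x + v‖ = 1 := by
  have hge : ∀ t : ℝ, 1 ≤ ‖x + t • v‖ := by
    intro t
    have := H.fle (x + t • v)
    simpa [H.fx, hv] using this
  by_contra hne
  have hgt : 1 < ‖x + v‖ := lt_of_le_of_ne (by simpa using hge 1) (Ne.symm hne)
  set ε := min ((r - ‖v‖) / 2) (‖x + v‖ - 1) with hε
  have hε0 : 0 < ε := by apply lt_min <;> linarith
  have hmem : 1 + ε ∈ Set.Icc ‖x + (0:ℝ) • v‖ ‖x + (1:ℝ) • v‖ := by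
    have := min_le_right ((r - ‖v‖) / 2) (‖x + v‖ - 1)
    simp only [zero_smul, add_zero, one_smul, H.nx]
    constructor <;> linarith
  obtain ⟨t, ht, hte⟩ := intermediate_value_Icc (zero_le_one (α := ℝ))
    (f := fun t : ℝ => ‖x + t • v‖) (by fun_prop) hmem
  have hte : ‖x + t • v‖ = 1 + ε := hte
  have hεr : ε ≤ (r - ‖v‖) / 2 := min_le_left _ _
  have h1 : ‖x + t • v‖ = f (x + t • v) := by
    apply H.norm_eq (by linarith)
    set y := x + t • v with hy
    have hypos : 0 < ‖y‖ := by linarith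
    have h2 : (‖y‖)⁻¹ • y - x = ((‖y‖)⁻¹ - 1) • y + t • v := by rw [hy]; module
    rw [h2]
    have h3 : ‖((‖y‖)⁻¹ - 1) • y‖ = ε := by
      have h5 : |(‖y‖)⁻¹ - 1| * ‖y‖ = |((‖y‖)⁻¹ - 1) * ‖y‖| := by rw [abs_mul, abs_of_pos hypos]
      rw [norm_smul, Real.norm_eq_abs, h5, sub_mul, inv_mul_cancel₀ hypos.ne', hte]
      simp [abs_of_pos hε0]
    have h4 : ‖t • v‖ ≤ ‖v‖ := by
      rw [norm_smul, Real.norm_of_nonneg ht.1]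
      nlinarith [ht.2, norm_nonneg v]
    refine (norm_add_le _ _).trans_lt ?_
    linarith
  rw [hte] at h1
  simp [H.fx, hv] at h1
  linarith

end TsFlatPt
end TsFlat

section TsStepA

variable {k : ℕ} {X : Type*} [NormedAddCommGroup X] [NormedSpace ℝ X] {e : ℕ+ → X}
  {c : ℕ+ → X →ₗ[ℝ] ℝ} {x : X} {f : X →L[ℝ] ℝ}

lemma ts_inv_half (hk : 2 ≤ k) : 0 < (k : ℝ)⁻¹ ∧ (k : ℝ)⁻¹ ≤ 1 / 2 ∧ (k : ℝ)⁻¹ * k = 1 := by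
  have hk' : (2:ℝ) ≤ k := by exact_mod_cast hk
  refine ⟨by positivity, ?_, by field_simp⟩
  rw [one_div]; exact inv_anti₀ (by norm_num) hk'

lemma tsA_sign (T : TsFacts k e c) {r : ℝ} (H : TsFlatPt x r f) (a : ℕ+) :
    ∃ s : ℝ, (s = 1 ∨ s = -1) ∧ s * c a x = |c a x| ∧ s * f (e a) = |f (e a)| := by
  have h1 : 0 ≤ c a x * f (e a) := by
    have := H.fle (x - (2 * c a x) • e a)
    rw [T.flip, H.nx] at this
    simp [H.fx] at this
    linarith
  rcases lt_trichotomy (c a x) 0 with h | h | h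
  · have : f (e a) ≤ 0 := by nlinarith
    exact ⟨-1, Or.inr rfl, by rw [abs_of_neg h]; ring, by rw [abs_of_nonpos this]; ring⟩
  · rcases le_total 0 (f (e a)) with h2 | h2
    · exact ⟨1, Or.inl rfl, by simp [h], by rw [abs_of_nonneg h2]; ring⟩
    · exact ⟨-1, Or.inr rfl, by simp [h], by rw [abs_of_nonpos h2]; ring⟩
  · have : 0 ≤ f (e a) := by nlinarith
    exact ⟨1, Or.inl rfl, by rw [abs_of_pos h]; ring, by rw [abs_of_nonneg this]; ring⟩

lemma tsA_f_le (hk : 2 ≤ k) (T : TsFacts k e c) {r : ℝ} (H : TsFlatPt x r f) (a : ℕ+)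
    (ha : |c a x| < 1) : |f (e a)| ≤ (k : ℝ)⁻¹ := by
  obtain ⟨t0, t1, -⟩ := ts_inv_half hk
  obtain ⟨s, hs, h1, h2⟩ := tsA_sign T H a
  obtain ⟨ρ, hρ, hsm⟩ := H.smooth
  have hsa : |s| = 1 := by rcases hs with rfl | rfl <;> simp
  set t := min (ρ / 2) ((1 - |c a x|) / 2) with ht
  have ht0 : 0 < t := by apply lt_min <;> linarith
  have ht1 : t ≤ ρ / 2 := min_le_left _ _
  have ht2 : t ≤ (1 - |c a x|) / 2 := min_le_right _ _
  have h3 := hsm ((t * s) • e a) (by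
    rw [norm_smul, T.ne, Real.norm_eq_abs, abs_mul, hsa, abs_of_pos ht0]; linarith)
  have h4 := T.add_le x a (t * s)
  rw [h3, map_smul, smul_eq_mul, mul_assoc, h2, H.nx, abs_mul, hsa, abs_of_pos ht0] at h4
  have h5 : |c a x + t * s| < 1 := by
    refine (abs_add_le _ _).trans_lt ?_
    rw [abs_mul, hsa, abs_of_pos ht0]; linarith
  have h6 : 0 ≤ t * |f (e a)| := by positivity
  rcases le_max_iff.1 h4 with h | h
  · linarith
  · have : t * |f (e a)| ≤ t * (k:ℝ)⁻¹ := by linarith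
    exact le_of_mul_le_mul_left this ht0

lemma tsA_V (hk : 2 ≤ k) (T : TsFacts k e c) {r : ℝ} (H : TsFlatPt x r f) (a : ℕ+)
    (ha : |c a x| < 1) (s : ℝ) (hs : s = 1 ∨ s = -1) (h1 : s * c a x = |c a x|)
    (h2 : s * f (e a) = |f (e a)|) (τ : ℝ) (hτ : |τ| < r) :
    ∃ y, ‖y‖ = 1 ∧ f y = 1 ∧ c a y = s * (|c a x| + τ) := by
  obtain ⟨t0, t1, -⟩ := ts_inv_half hk
  have hF := tsA_f_le hk T H a ha
  have hF0 := abs_nonneg (f (e a))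
  have hX0 := abs_nonneg (c a x)
  set F := |f (e a)|
  set A := |c a x|
  have hss : s * s = 1 := by rcases hs with rfl | rfl <;> norm_num
  have hsa : |s| = 1 := by rcases hs with rfl | rfl <;> simp
  have hcx : c a x = s * A := by rw [← h1, ← mul_assoc, hss, one_mul]
  have hFA : F * A ≤ 1 / 2 := by nlinarith
  have hD : 0 < 1 - F * A := by linarith
  set w := s • e a - F • x with hw
  have hfw : f w = 0 := by simp [hw, H.fx, h2]
  have hcw : c a w = s * (1 - F * A) := by
    simp [hw, T.ce, hcx]; ring
  have hnw : ‖w‖ ≤ 1 - F * A := by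
    rw [← T.flip w a, hcw]
    have : w - (2 * (s * (1 - F * A))) • e a = -(F • x + (s * (1 - 2 * (F * A))) • e a) := by
      rw [hw]; module
    rw [this, norm_neg]
    refine (T.add_le _ _ _).trans (max_le ?_ ?_)
    · have : c a (F • x) + s * (1 - 2 * (F * A)) = s * (1 - F * A) := by
        simp [hcx]; ring
      rw [this, abs_mul, hsa, abs_of_pos hD]; simp
    · rw [norm_smul, H.nx, Real.norm_of_nonneg hF0, abs_mul, hsa,
        abs_of_nonneg (by linarith : 0 ≤ 1 - 2 * (F * A))]
      nlinarith [mul_nonneg hF0 t0.le, mul_nonneg hF0 (sub_nonneg.2 ha.le),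
        mul_nonneg hX0 t0.le, mul_nonneg (mul_nonneg hF0 t0.le) hX0,
        mul_nonneg (mul_nonneg hF0 (sub_nonneg.2 t1)) (sub_nonneg.2 ha.le)]
  refine ⟨x + (τ / (1 - F * A)) • w, H.tangent (by simp [hfw]) ?_, by simp [hfw, H.fx], ?_⟩
  · rw [norm_smul, Real.norm_eq_abs, abs_div, abs_of_pos hD]
    refine lt_of_le_of_lt ?_ hτ
    rw [div_mul_eq_mul_div, div_le_iff₀ hD]
    exact mul_le_mul_of_nonneg_left hnw (abs_nonneg _)
  · simp only [map_add, map_smul, hcw, hcx, smul_eq_mul]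
    rw [show τ / (1 - F * A) * (s * (1 - F * A)) = s * τ * ((1 - F * A) / (1 - F * A)) by ring,
      div_self hD.ne']
    ring

lemma tsA_le (hk : 2 ≤ k) (T : TsFacts k e c) (H : TsFlatPt x (1 - (k:ℝ)⁻¹) f) (a : ℕ+)
    (ha : |c a x| < 1) : |c a x| ≤ (k:ℝ)⁻¹ := by
  obtain ⟨s, hs, h1, h2⟩ := tsA_sign T H a
  have hsa : |s| = 1 := by rcases hs with rfl | rfl <;> simp
  by_contra hcon
  push Not at hcon
  obtain ⟨t0, t1, -⟩ := ts_inv_half hk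
  have hX0 := abs_nonneg (c a x)
  set τ := 1 - |c a x| / 2 - (k:ℝ)⁻¹ / 2 with hτ
  obtain ⟨y, h3, -, h4⟩ := tsA_V hk T H a ha s hs h1 h2 τ (by
    rw [abs_of_pos] <;> linarith)
  have := T.le a y
  rw [h4, h3, abs_mul, hsa, one_mul, abs_le] at this
  linarith [this.2]

lemma tsA_ge (hk : 2 ≤ k) (T : TsFacts k e c) (H : TsFlatPt x (1 - (k:ℝ)⁻¹) f) (a : ℕ+)
    (ha : |c a x| < 1) (hf : f (e a) ≠ 0) : 1 - (k:ℝ)⁻¹ ≤ |c a x| := by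
  obtain ⟨s, hs, h1, h2⟩ := tsA_sign T H a
  by_contra hcon
  push Not at hcon
  have hX0 := abs_nonneg (c a x)
  set τ := -(|c a x| / 2 + (1 - (k:ℝ)⁻¹) / 2) with hτ
  obtain ⟨y, h3, h5, h4⟩ := tsA_V hk T H a ha s hs h1 h2 τ (by
    rw [hτ, abs_neg, abs_of_pos] <;> linarith)
  have h6 := H.fle (y - (2 * c a y) • e a)
  rw [T.flip, h3, h4] at h6
  simp only [map_sub, map_smul, smul_eq_mul, h5] at h6
  have h7 : 2 * (s * (|c a x| + τ)) * f (e a) = 2 * (|c a x| + τ) * |f (e a)| := by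
    rw [← h2]; ring
  rw [h7] at h6
  have h8 : 0 < |f (e a)| := abs_pos.2 hf
  have h9 : |c a x| + τ < 0 := by linarith
  nlinarith

end TsStepA

section TsStepA2

variable {k : ℕ} {X : Type*} [NormedAddCommGroup X] [NormedSpace ℝ X] {e : ℕ+ → X}
  {c : ℕ+ → X →ₗ[ℝ] ℝ} {x : X} {f : X →L[ℝ] ℝ}

lemma ts_c_sum (T : TsFacts k e c) (B : Finset ℕ+) (t : ℕ+ → ℝ) (j : ℕ+) :
    c j (∑ b ∈ B, t b • e b) = if j ∈ B then t j else 0 := by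
  simp [map_sum, T.ce]

lemma tsA_linf_zero (T : TsFacts k e c) {r : ℝ} (H : TsFlatPt x r f) (p : ℕ+)
    (hp : (p : ℕ) ≤ k) (ha : |c p x| < 1) : f (e p) = 0 := by
  obtain ⟨s, hs, h1, h2⟩ := tsA_sign T H p
  obtain ⟨ρ, hρ, hsm⟩ := H.smooth
  have hsa : |s| = 1 := by rcases hs with rfl | rfl <;> simp
  set t := min (ρ / 2) ((1 - |c p x|) / 2) with ht
  have ht0 : 0 < t := by apply lt_min <;> linarith
  have ht1 : t ≤ ρ / 2 := min_le_left _ _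
  have ht2 : t ≤ (1 - |c p x|) / 2 := min_le_right _ _
  have h3 := hsm ((t * s) • e p) (by
    rw [norm_smul, T.ne, Real.norm_eq_abs, abs_mul, hsa, abs_of_pos ht0]; linarith)
  have h4 := T.linf x p (t * s) hp
  rw [h3, map_smul, smul_eq_mul, mul_assoc, h2, H.nx] at h4
  have h5 : |c p x + t * s| < 1 := by
    refine (abs_add_le _ _).trans_lt ?_
    rw [abs_mul, hsa, abs_of_pos ht0]; linarith
  rw [max_eq_right h5.le] at h4
  have h6 : |f (e p)| ≤ 0 := by
    by_contra h
    push Not at h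
    have := mul_pos ht0 h
    linarith
  exact abs_nonpos_iff.1 h6

lemma tsA_caseB (T : TsFacts 2 e c) (H : TsFlatPt x (1 / 2) f) (B : Finset ℕ+)
    (hcard : B.card = 4) (h4 : ∀ b ∈ B, 4 ≤ (b : ℕ)) (hx : ∀ b ∈ B, |c b x| = 1 / 2) : False := by
  have hsg : ∀ b, ∃ s : ℝ, (s = 1 ∨ s = -1) ∧ s * c b x = |c b x| := fun b => by
    obtain ⟨s, h1, h2, -⟩ := tsA_sign T H b
    exact ⟨s, h1, h2⟩
  choose s hs hsx using hsg
  have hsa : ∀ b, |s b| = 1 := fun b => by rcases hs b with h | h <;> simp [h]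
  have hss : ∀ b, s b * s b = 1 := fun b => by rcases hs b with h | h <;> simp [h]
  have hcx : ∀ b ∈ B, c b x = s b / 2 := fun b hb => by
    have h1 := hsx b
    rw [hx b hb] at h1
    have h2 := hss b
    linear_combination (s b) * h1 - c b x * h2
  obtain ⟨ρ, hρ, hsm⟩ := H.smooth
  have hle : ∀ v, ‖v‖ < ρ → 1 / 2 * ∑ b ∈ B, s b * c b v ≤ f v := by
    intro v hv
    have h1 := T.ge (x + v) B (by rw [hcard]; exact h4)
    rw [hsm v hv] at h1
    have h2 : ∑ b ∈ B, (1 / 2 + s b * c b v) ≤ ∑ b ∈ B, |c b (x + v)| := by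
      apply Finset.sum_le_sum
      intro b hb
      have h3 : 1 / 2 + s b * c b v = s b * c b (x + v) := by
        rw [map_add, mul_add, hsx, hx b hb]
      rw [h3]
      refine (le_abs_self _).trans ?_
      rw [abs_mul, hsa, one_mul]
    rw [Finset.sum_add_distrib, Finset.sum_const, hcard] at h2
    norm_num at h1 h2
    linarith
  have hle2 : ∀ v, 1 / 2 * ∑ b ∈ B, s b * c b v ≤ f v := by
    intro v
    have hv0 := norm_nonneg v
    have ht : 0 < ρ / (‖v‖ + 1) := by positivity
    have h1 := hle ((ρ / (‖v‖ + 1)) • v) (by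
      rw [norm_smul, Real.norm_of_nonneg ht.le, div_mul_eq_mul_div, div_lt_iff₀ (by positivity)]
      nlinarith)
    have h2 : ∑ b ∈ B, s b * c b ((ρ / (‖v‖ + 1)) • v) =
        (ρ / (‖v‖ + 1)) * ∑ b ∈ B, s b * c b v := by
      rw [Finset.mul_sum]; apply Finset.sum_congr rfl; intro b _
      rw [map_smul, smul_eq_mul]; ring
    rw [h2, map_smul, smul_eq_mul] at h1
    refine le_of_mul_le_mul_left ?_ ht
    linarith
  have hf : ∀ v, f v = 1 / 2 * ∑ b ∈ B, s b * c b v := by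
    intro v
    refine le_antisymm ?_ (hle2 v)
    have := hle2 (-v)
    simp only [map_neg, mul_neg, Finset.sum_neg_distrib] at this
    linarith
  obtain ⟨d, hd⟩ : B.Nonempty := Finset.card_pos.1 (by omega)
  obtain ⟨N, hN⟩ := Infinite.exists_notMem_finset (B ∪ Finset.Icc 1 3)
  have hNB : N ∉ B := fun h => hN (Finset.mem_union_left _ h)
  have hN4 : 4 ≤ (N : ℕ) := by
    by_contra h
    refine hN (Finset.mem_union_right _ (Finset.mem_Icc.2 ⟨PNat.one_le _, ?_⟩))
    rw [← PNat.coe_le_coe]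
    change (N:ℕ) ≤ 3
    omega
  obtain ⟨u, hu1, hu2⟩ : ∃ u : ℝ, |u| = 0.26 ∧ 0.26 ≤ |c N x + u| := by
    rcases le_total 0 (c N x) with h | h
    · exact ⟨0.26, by norm_num [abs_of_pos], by rw [abs_of_nonneg] <;> linarith⟩
    · exact ⟨-0.26, by norm_num [abs_of_pos], by rw [abs_of_nonpos] <;> linarith⟩
  have hNd : N ≠ d := fun h => hNB (h ▸ hd)
  set t : ℕ+ → ℝ := fun b => if b = N then u else if b = d then -(s d) / 4 else s b / 12 with ht
  have htN : t N = u := by simp [ht]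
  have htd : t d = -(s d) / 4 := by simp [ht, hNd.symm]
  have htb : ∀ b ∈ B.erase d, t b = s b / 12 := by
    intro b hb
    have h1 := Finset.mem_erase.1 hb
    have h2 : b ≠ N := fun h => hNB (h ▸ h1.2)
    simp [ht, h1.1, h2]
  have hce : (B.erase d).card = 3 := by rw [Finset.card_erase_of_mem hd, hcard]
  set v := ∑ b ∈ insert N B, t b • e b with hv
  have hcv : ∀ b ∈ insert N B, c b v = t b := by
    intro b hb
    rw [hv, ts_c_sum T, if_pos hb]
  have hfv : f v = 0 := by
    rw [hf]
    have h1 : ∑ b ∈ B, s b * c b v = ∑ b ∈ B, s b * t b :=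
      Finset.sum_congr rfl fun b hb => by rw [hcv b (Finset.mem_insert_of_mem hb)]
    have h2 : ∑ b ∈ B.erase d, s b * t b = ∑ b ∈ B.erase d, (1 / 12 : ℝ) :=
      Finset.sum_congr rfl fun b hb => by
        rw [htb b hb]; have := hss b; linear_combination this / 12
    rw [h1, ← Finset.add_sum_erase _ _ hd, h2, htd, Finset.sum_const, hce]
    have := hss d
    norm_num
    linear_combination -this / 4
  have hnv : ‖v‖ ≤ 0.38 := by
    apply T.le_max _ _ _ (by norm_num)
    · intro b hb
      simp only [ht]
      split_ifs
      · rw [hu1]; norm_num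
      · rw [abs_div, abs_neg, hsa]; norm_num
      · rw [abs_div, hsa]; norm_num
    · rw [Finset.sum_insert hNB, ← Finset.add_sum_erase _ _ hd, htN, htd, hu1,
        Finset.sum_congr rfl (fun b hb => by rw [htb b hb, abs_div, hsa]), Finset.sum_const, hce,
        abs_div, abs_neg, hsa]
      norm_num
  have h1 := H.tangent hfv (by norm_num at hnv ⊢; linarith)
  have hNe : N ∉ B.erase d := fun h => hNB (Finset.mem_of_mem_erase h)
  have h2 := T.ge (x + v) (insert N (B.erase d)) (by
    rw [Finset.card_insert_of_notMem hNe, hce]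
    intro b hb
    rcases Finset.mem_insert.1 hb with rfl | hb
    · exact hN4
    · exact h4 b (Finset.mem_of_mem_erase hb))
  rw [h1, Finset.sum_insert hNe, map_add, hcv N (Finset.mem_insert_self _ _), htN,
    Finset.sum_congr rfl (g := fun _ => (7/12:ℝ)) (fun b hb => by
      have hbB := Finset.mem_of_mem_erase hb
      rw [map_add, hcv b (Finset.mem_insert_of_mem hbB), htb b hb, hcx b hbB,
        show s b / 2 + s b / 12 = s b * (7/12) by ring, abs_mul, hsa, one_mul,
        abs_of_pos (by norm_num)]), Finset.sum_const, hce] at h2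
  norm_num at h2 hu2
  linarith

lemma tsA_false (hk : 2 ≤ k) (T : TsFacts k e c) (H : TsFlatPt x (1 - (k:ℝ)⁻¹) f)
    (hlt : ∀ a, |c a x| < 1) : False := by
  obtain ⟨t0, t1, t2⟩ := ts_inv_half hk
  have hsum := (T.hs x).mapL f
  simp only [map_smul, smul_eq_mul, H.fx] at hsum
  have hex : ∃ a, f (e a) ≠ 0 := by
    by_contra h
    push Not at h
    simp only [h, mul_zero] at hsum
    exact zero_ne_one (hasSum_zero.unique hsum)
  obtain ⟨a0, ha0⟩ := hex
  have h1 := tsA_ge hk T H a0 (hlt a0) ha0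
  have h2 := tsA_le hk T H a0 (hlt a0)
  have hth : (k:ℝ)⁻¹ = 1 / 2 := by linarith
  have hk2 : k = 2 := by
    rw [hth] at t2
    have : (k:ℝ) = 2 := by linarith
    exact_mod_cast this
  subst hk2
  have hhalf : ∀ a, f (e a) ≠ 0 → |c a x| = 1 / 2 := fun a ha => by
    have h1 := tsA_ge hk T H a (hlt a) ha
    have h2 := tsA_le hk T H a (hlt a)
    linarith
  have hfle : ∀ a, |f (e a)| ≤ 1 / 2 := fun a => by
    have := tsA_f_le hk T H a (hlt a); linarith
  have hfin : {a | f (e a) ≠ 0}.Finite := by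
    have h3 := (T.hs x).summable.tendsto_cofinite_zero
    have h4 := h3.norm.eventually_lt_const (u := 1 / 2) (by simp)
    rw [Filter.eventually_cofinite] at h4
    refine h4.subset fun a ha => ?_
    simp only [Set.mem_setOf_eq, norm_smul, T.ne, Real.norm_eq_abs, mul_one, not_lt]
    exact (hhalf a ha).ge
  set A := hfin.toFinset with hA
  have hmA : ∀ a, a ∈ A ↔ f (e a) ≠ 0 := fun a => by simp [hA]
  have hsumA : ∑ a ∈ A, c a x * f (e a) = 1 := by
    refine (hasSum_sum_of_ne_finset_zero ?_).unique hsum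
    intro b hb
    rw [hmA, not_not] at hb
    rw [hb, mul_zero]
  choose s hs hsx hsf using tsA_sign T H
  have hsa : ∀ b, |s b| = 1 := fun b => by rcases hs b with h | h <;> simp [h]
  have hss : ∀ b, s b * s b = 1 := fun b => by rcases hs b with h | h <;> simp [h]
  have hsumf : ∑ a ∈ A, |f (e a)| = 2 := by
    have : ∑ a ∈ A, c a x * f (e a) = ∑ a ∈ A, 1 / 2 * |f (e a)| := by
      apply Finset.sum_congr rfl
      intro a ha
      rw [← hhalf a ((hmA a).1 ha), ← hsx, ← hsf]
      linear_combination (- c a x * f (e a)) * hss a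
    rw [this, ← Finset.mul_sum] at hsumA
    linarith
  have hcard : 4 ≤ A.card := by
    have h3 := Finset.sum_le_card_nsmul A (fun a => |f (e a)|) (1/2) (fun a _ => hfle a)
    rw [hsumf, nsmul_eq_mul] at h3
    have : (4:ℝ) ≤ A.card := by linarith
    exact_mod_cast this
  have h3A : ∀ a ∈ A, 3 ≤ (a:ℕ) := by
    intro a ha
    by_contra h
    exact (hmA a).1 ha (tsA_linf_zero T H a (by omega) (hlt a))
  have H' : TsFlatPt x (1 / 2) f := by
    have : (1 / 2 : ℝ) = 1 - ((2:ℕ) : ℝ)⁻¹ := by norm_num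
    rw [this]; exact H
  by_cases hc : 4 ≤ (A.erase 3).card
  · obtain ⟨B, hBA, hB⟩ := Finset.exists_subset_card_eq hc
    refine tsA_caseB T H' B hB ?_ ?_
    · intro b hb
      have h5 := Finset.mem_erase.1 (hBA hb)
      have h6 := h3A b h5.2
      have h7 : (b:ℕ) ≠ 3 := fun h => h5.1 (PNat.coe_injective h)
      omega
    · intro b hb
      exact hhalf b ((hmA b).1 (Finset.mem_of_mem_erase (hBA hb)))
  · have h3 : (3:ℕ+) ∈ A := by
      by_contra h
      rw [Finset.erase_eq_of_notMem h] at hc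
      exact hc hcard
    rw [Finset.card_erase_of_mem h3] at hc
    have h5 := T.flat A s 3 3 (by norm_num) (by omega) h3 (le_refl 3) (fun b _ => (hsa b).le)
    have h6 := H.fle (∑ b ∈ A, s b • e b)
    rw [map_sum] at h6
    simp only [map_smul, smul_eq_mul, hsf] at h6
    rw [hsumf] at h6
    norm_num at h5
    linarith

end TsStepA2

section TsStepB

variable {k : ℕ} {X : Type*} [NormedAddCommGroup X] [NormedSpace ℝ X] {e : ℕ+ → X}
  {c : ℕ+ → X →ₗ[ℝ] ℝ}

lemma ts_ext (T : TsFacts k e c) {x y : X} (h : ∀ i, c i x = c i y) : x = y := by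
  have h1 := T.hs x
  simp only [h] at h1
  exact h1.unique (T.hs y)

lemma ts_two (hk : 2 ≤ k) (T : TsFacts k e c) {y : X} (hy : ‖y‖ = 1) (i : ℕ+) {σ : ℝ}
    (hσ : σ = 1 ∨ σ = -1) : ‖y + σ • e i‖ = 2 ↔ c i y = σ := by
  obtain ⟨t0, t1, -⟩ := ts_inv_half hk
  have hsa : |σ| = 1 := by rcases hσ with h | h <;> simp [h]
  constructor
  · intro h
    have h1 := T.add_le y i σ
    rw [h, hy, hsa] at h1
    have h2 := T.le i y
    rw [hy, abs_le] at h2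
    rcases le_max_iff.1 h1 with h | h
    · rcases hσ with rfl | rfl
      · rcases le_abs.1 h with h | h <;> linarith
      · rcases le_abs.1 h with h | h <;> linarith
    · linarith
  · intro h
    apply le_antisymm
    · refine (norm_add_le _ _).trans ?_
      rw [hy, norm_smul, T.ne, Real.norm_eq_abs, hsa]; norm_num
    · have h1 := T.le i (y + σ • e i)
      simp only [map_add, map_smul, T.ce, h, if_true, smul_eq_mul, mul_one] at h1
      rw [← two_mul, abs_mul, hsa] at h1
      norm_num at h1
      exact h1

lemma ts_near (T : TsFacts k e c) {y : X} (hy : ‖y‖ = 1) (i : ℕ+)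
    (h : ‖y - e i‖ < 1 - (k:ℝ)⁻¹) (h0 : 0 < (k:ℝ)⁻¹) : c i y = 1 := by
  have h1 := T.add_le (y - e i) i 1
  have h2 := T.le i y
  have h3 := T.le i (y - e i)
  rw [hy, abs_le] at h2
  simp only [map_sub, T.ce, if_true] at h1 h3
  rw [abs_le] at h3
  simp [hy] at h1
  rcases h1 with h1 | h1
  · rcases le_abs.1 h1 with h | h <;> linarith
  · linarith

lemma ts_proj (T : TsFacts k e c) {y : X} (hy : ‖y‖ = 1) (i : ℕ+) :
    ‖y - c i y • e i‖ ≤ 1 := by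
  have h1 : (2:ℝ) • (y - c i y • e i) = y + (y - (2 * c i y) • e i) := by module
  have h2 := norm_add_le y (y - (2 * c i y) • e i)
  rw [← h1, T.flip, norm_smul, hy] at h2
  norm_num at h2
  linarith

lemma tsB_aux (hk : 2 ≤ k) (T : TsFacts k e c) (x x' : X) (hx : ‖x‖ = 1) (hx' : ‖x'‖ = 1)
    (hne : x ≠ x')
    (F1 : ∀ g h : X, ‖g‖ = 1 → ‖h‖ = 1 → ‖g - x'‖ = 2 → ‖h - x‖ = 2 → ‖g - h‖ = 2)
    (F2 : ∀ g : X, ‖g‖ = 1 → ‖g - x'‖ = 2 → ‖g - x‖ ≤ 1)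
    (F2' : ∀ g : X, ‖g‖ = 1 → ‖g - x‖ = 2 → ‖g - x'‖ ≤ 1)
    (F3 : ∀ g : X, ‖g‖ = 1 → ‖g - x‖ < 1 - (k:ℝ)⁻¹ → ‖g - x'‖ = 2) :
    ∃ (j : ℕ+) (σ : ℝ), (σ = 1 ∨ σ = -1) ∧ x = σ • e j ∧ x' = -(σ • e j) := by
  obtain ⟨t0, t1, -⟩ := ts_inv_half hk
  have hdbl : ∀ z : X, ‖z‖ = 1 → ‖-z - z‖ = 2 := by
    intro z hz
    rw [show -z - z = (-2:ℝ) • z by module, norm_smul, hz]; norm_num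
  have F4 : ∀ g : X, ‖g‖ = 1 → ‖g - x'‖ = 2 → ‖-g - x‖ = 2 := by
    intro g hg h
    have := F1 g (-x) hg (by rwa [norm_neg]) h (hdbl x hx)
    rw [← norm_neg]
    rw [← this]; congr 1; abel
  have F5 : ∀ y : X, ‖y‖ = 1 → ‖y + x‖ = 2 → ‖y - x'‖ = 2 := by
    intro y hy h
    have := F1 (-x') (-y) (by rwa [norm_neg]) (by rwa [norm_neg]) (hdbl x' hx') (by
      rw [← norm_neg, ← h]; congr 1; abel)
    rw [← this]; congr 1; abel
  have hx0 : x ≠ 0 := by intro h; simp [h] at hx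
  obtain ⟨f, hf1, hf2⟩ := exists_dual_vector ℝ x (by simpa using hx0)
  have hF : TsFlatPt x (1 - (k:ℝ)⁻¹) f := by
    refine ⟨hx, by linarith, ?_, ?_, by rw [hf2, hx]; rfl⟩
    · intro g h hg hh hg1 hh1
      have h1 := F4 h hh (F3 h hh hh1)
      have h2 := F1 g (-h) hg (by rwa [norm_neg]) (F3 g hg hg1) h1
      rwa [sub_neg_eq_add] at h2
    · intro y
      have := f.le_opNorm y
      rw [hf1, one_mul] at this
      exact (le_abs_self _).trans this
  obtain ⟨j, hj⟩ : ∃ j, 1 ≤ |c j x| := by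
    by_contra h
    push Not at h
    exact tsA_false hk T hF h
  have hj1 : |c j x| = 1 := le_antisymm (hx ▸ T.le j x) hj
  obtain ⟨σ, hσx⟩ : ∃ σ, σ = c j x := ⟨_, rfl⟩
  rw [← hσx] at hj1
  have hσ : σ = 1 ∨ σ = -1 := eq_or_eq_neg_of_abs_eq hj1
  have key : ∀ l, l ≠ j → ∀ τ : ℝ, (τ = 1 ∨ τ = -1) → |τ - c l x| ≤ 1 ∧ |τ + c l x'| ≤ 1 := by
    intro l hl τ hτ
    have hτ1 : |τ| = 1 := by rcases hτ with h | h <;> simp [h]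
    have hcj : c j (σ • e j + τ • e l) = σ := by simp [T.ce, hl]
    have hcl : c l (σ • e j + τ • e l) = τ := by simp [T.ce, hl.symm]
    have hn : ‖σ • e j + τ • e l‖ = 1 := by
      apply le_antisymm
      · have h1 := T.le_max {j, l} (fun b => if b = j then σ else τ) 1 zero_le_one (by
          intro b _; split_ifs <;> linarith) (by
          rw [Finset.sum_pair hl.symm]; simp [hl, hj1, hτ1]; linarith)
        rw [Finset.sum_pair hl.symm] at h1
        simpa [hl] using h1
      · have := T.le j (σ • e j + τ • e l)
        rwa [hcj, hj1] at this
    set y := σ • e j + τ • e l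
    have h2 : ‖y + x‖ = 2 := by
      apply le_antisymm
      · refine (norm_add_le _ _).trans ?_
        rw [hn, hx]; norm_num
      · have h1 := T.le j (y + x)
        rw [map_add, hcj, ← hσx, ← two_mul, abs_mul, hj1] at h1
        norm_num at h1; exact h1
    have h3 := F5 y hn h2
    have h4 := (T.le l _).trans (F2 y hn h3)
    have h5 := (T.le l _).trans (F2' (-y) (by rwa [norm_neg]) (F4 y hn h3))
    rw [map_sub, hcl] at h4
    rw [map_sub, map_neg, hcl, ← abs_neg] at h5
    rw [show -(-τ - c l x') = τ + c l x' by ring] at h5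
    exact ⟨h4, h5⟩
  have hz : ∀ l, l ≠ j → c l x = 0 ∧ c l x' = 0 := by
    intro l hl
    have h1 := key l hl 1 (Or.inl rfl)
    have h2 := key l hl (-1) (Or.inr rfl)
    simp only [abs_le] at h1 h2
    constructor <;> linarith [h1.1.1, h1.1.2, h1.2.1, h1.2.2, h2.1.1, h2.1.2, h2.2.1, h2.2.2]
  have hxe : x = σ • e j := by
    apply ts_ext T
    intro l
    by_cases hl : l = j
    · subst hl; simp [T.ce, hσx]
    · simp [T.ce, Ne.symm hl, (hz l hl).1]
  have hxe' : x' = c j x' • e j := by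
    apply ts_ext T
    intro l
    by_cases hl : l = j
    · subst hl; simp [T.ce]
    · simp [T.ce, Ne.symm hl, (hz l hl).2]
  refine ⟨j, σ, hσ, hxe, ?_⟩
  have h1 : |c j x'| = 1 := by
    rw [hxe', norm_smul, T.ne, mul_one, Real.norm_eq_abs] at hx'
    exact hx'
  have h2 : c j x' ≠ σ := fun h => hne (by rw [hxe', h, ← hxe])
  rw [← neg_smul]
  convert hxe' using 2
  rcases hσ with h | h <;> rcases eq_or_eq_neg_of_abs_eq h1 with h' | h' <;>
    first
      | exact absurd (h'.trans h.symm) h2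
      | linarith

lemma tsB (hk : 2 ≤ k) (T : TsFacts k e c)
    (U : Metric.sphere (0 : X) 1 ≃ᵢ Metric.sphere (0 : X) 1) (i : ℕ+)
    (p n : Metric.sphere (0 : X) 1) (hp : (p : X) = e i) (hn : (n : X) = -e i) :
    ∃ (j : ℕ+) (σ : ℝ), (σ = 1 ∨ σ = -1) ∧ (U p : X) = σ • e j ∧ (U n : X) = -(σ • e j) := by
  obtain ⟨t0, t1, -⟩ := ts_inv_half hk
  have hS : ∀ z : Metric.sphere (0 : X) 1, ‖(z : X)‖ = 1 := fun z => by simp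
  have hd : ∀ y w : Metric.sphere (0 : X) 1, ‖(U y : X) - U w‖ = ‖(y : X) - w‖ := by
    intro y w
    have := U.isometry.dist_eq y w
    rwa [Subtype.dist_eq, Subtype.dist_eq, dist_eq_norm, dist_eq_norm] at this
  have hpull : ∀ g : X, ‖g‖ = 1 → ∃ y : Metric.sphere (0 : X) 1, (U y : X) = g := by
    intro g hg
    refine ⟨U.symm ⟨g, by simpa using hg⟩, by simp⟩
  have e1 : ∀ y : Metric.sphere (0 : X) 1, ‖(y : X) - n‖ = 2 ↔ c i y = 1 := by
    intro y
    rw [hn, ← ts_two hk T (hS y) i (Or.inl rfl), one_smul, sub_neg_eq_add]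
  have e2 : ∀ y : Metric.sphere (0 : X) 1, ‖(y : X) - p‖ = 2 ↔ c i y = -1 := by
    intro y
    rw [hp, ← ts_two hk T (hS y) i (Or.inr rfl), neg_one_smul, sub_eq_add_neg]
  apply tsB_aux hk T _ _ (hS _) (hS _)
  · intro h
    have h1 : (p : X) = n := congrArg Subtype.val (U.injective (Subtype.ext h))
    have h2 := congrArg (c i) h1
    rw [hp, hn, map_neg, T.ce] at h2
    norm_num at h2
  · intro g h hg hh hg1 hh1
    obtain ⟨y, rfl⟩ := hpull g hg
    obtain ⟨w, rfl⟩ := hpull h hh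
    rw [hd] at *
    rw [e1] at hg1
    rw [e2] at hh1
    apply le_antisymm
    · refine (norm_sub_le _ _).trans ?_
      rw [hS, hS]; norm_num
    · have := T.le i ((y:X) - w)
      rw [map_sub, hg1, hh1] at this
      norm_num at this; exact this
  · intro g hg hg1
    obtain ⟨y, rfl⟩ := hpull g hg
    rw [hd] at *
    rw [e1] at hg1
    have := ts_proj T (hS y) i
    rwa [hg1, one_smul, ← hp] at this
  · intro g hg hg1
    obtain ⟨y, rfl⟩ := hpull g hg
    rw [hd] at *
    rw [e2] at hg1
    have := ts_proj T (hS y) i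
    rwa [hg1, neg_one_smul, ← hn] at this
  · intro g hg hg1
    obtain ⟨y, rfl⟩ := hpull g hg
    rw [hd] at *
    rw [e1]
    rw [hp] at hg1
    exact ts_near T (hS y) i hg1 t0

end TsStepB

section TsStepC

variable {k : ℕ} {X : Type*} [NormedAddCommGroup X] [NormedSpace ℝ X] {e : ℕ+ → X}
  {c : ℕ+ → X →ₗ[ℝ] ℝ}

lemma tsC (hk : 2 ≤ k) (T : TsFacts k e c)
    (U : Metric.sphere (0 : X) 1 ≃ᵢ Metric.sphere (0 : X) 1) :
    ∃ (π : Equiv.Perm ℕ+) (ε : ℕ+ → ℝ), (∀ i, ε i = 1 ∨ ε i = -1) ∧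
      (∀ (i : ℕ+) (p : Metric.sphere (0 : X) 1), (p : X) = e i → (U p : X) = ε i • e (π i)) ∧
      ∀ (i : ℕ+) (y : Metric.sphere (0 : X) 1) (τ : ℝ), (τ = 1 ∨ τ = -1) →
        ‖(U y : X) + (τ * ε i) • e (π i)‖ = ‖(y : X) + τ • e i‖ := by
  have hE : ∀ i, e i ∈ Metric.sphere (0 : X) 1 := fun i => by simp [T.ne]
  have hN : ∀ i, -e i ∈ Metric.sphere (0 : X) 1 := fun i => by simp [T.ne]
  choose π ε hε hp hn using fun i => tsB hk T U i ⟨e i, hE i⟩ ⟨-e i, hN i⟩ rfl rfl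
  have hcoord : ∀ (i j : ℕ+) (s t : ℝ), s ≠ 0 → s • e i = t • e j → i = j := by
    intro i j s t hs h
    by_contra hij
    have := congrArg (c i) h
    simp [T.ce, Ne.symm hij] at this
    exact hs this
  have hε0 : ∀ i, ε i ≠ 0 := fun i => by rcases hε i with h | h <;> rw [h] <;> norm_num
  have hinj : Function.Injective π := by
    intro i j hij
    have h1 : (U ⟨e i, hE i⟩ : X) = U ⟨e j, hE j⟩ ∨ (U ⟨e i, hE i⟩ : X) = U ⟨-e j, hN j⟩ := by
      rw [hp, hp, hn, hij]
      rcases hε i with h | h <;> rcases hε j with h' | h' <;> simp [h, h']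
    rcases h1 with h1 | h1
    · have h2 : e i = e j := congrArg Subtype.val (U.injective (Subtype.ext h1))
      exact hcoord i j 1 1 one_ne_zero (by rw [h2])
    · have h2 : e i = -e j := congrArg Subtype.val (U.injective (Subtype.ext h1))
      exact hcoord i j 1 (-1) one_ne_zero (by rw [h2]; simp)
  have hsurj : Function.Surjective π := by
    intro j
    obtain ⟨i, σ, hσ, h1, -⟩ := tsB hk T U.symm j ⟨e j, hE j⟩ ⟨-e j, hN j⟩ rfl rfl
    refine ⟨i, ?_⟩
    rcases hσ with rfl | rfl
    · have h2 : U.symm ⟨e j, hE j⟩ = ⟨e i, hE i⟩ := Subtype.ext (by rw [h1]; simp)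
      have h3 : U ⟨e i, hE i⟩ = ⟨e j, hE j⟩ := by rw [← h2]; simp
      have h4 := hp i
      rw [h3] at h4
      exact (hcoord j (π i) 1 (ε i) one_ne_zero (by rw [← h4]; simp)).symm
    · have h2 : U.symm ⟨e j, hE j⟩ = ⟨-e i, hN i⟩ := Subtype.ext (by rw [h1]; simp)
      have h3 : U ⟨-e i, hN i⟩ = ⟨e j, hE j⟩ := by rw [← h2]; simp
      have h4 := hn i
      rw [h3] at h4
      exact (hcoord j (π i) 1 (-ε i) one_ne_zero (by rw [neg_smul, ← h4]; simp)).symm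
  have hd : ∀ y w : Metric.sphere (0 : X) 1, ‖(U y : X) - U w‖ = ‖(y : X) - w‖ := by
    intro y w
    have := U.isometry.dist_eq y w
    rwa [Subtype.dist_eq, Subtype.dist_eq, dist_eq_norm, dist_eq_norm] at this
  refine ⟨Equiv.ofBijective π ⟨hinj, hsurj⟩, ε, hε, ?_, ?_⟩
  · rintro i ⟨p, hp'⟩ rfl
    exact hp i
  · intro i y τ hτ
    change ‖(U y : X) + (τ * ε i) • e (π i)‖ = ‖(y : X) + τ • e i‖
    rcases hτ with rfl | rfl
    · have := hd y ⟨-e i, hN i⟩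
      rw [hn] at this
      simpa using this
    · have := hd y ⟨e i, hE i⟩
      rw [hp] at this
      simpa [sub_eq_add_neg] using this

lemma ts_pick (π : Equiv.Perm ℕ+) (M m : ℕ) (p : ℕ+) :
    ∃ C : Finset ℕ+, C.card = m ∧ p ∉ C ∧ (1 : ℕ+) ∉ C ∧
      ∀ b ∈ C, M < (b : ℕ) ∧ M < (π b : ℕ) := by
  have hfin : {b : ℕ+ | (b : ℕ) ≤ M}.Finite :=
    Set.Finite.preimage PNat.coe_injective.injOn (Set.finite_Iic M)
  have hfin2 : {b : ℕ+ | (π b : ℕ) ≤ M}.Finite :=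
    Set.Finite.preimage (f := π) π.injective.injOn hfin
  have h3 := (((hfin.union hfin2).insert p).insert 1).infinite_compl
  obtain ⟨C, hC, hc⟩ := h3.exists_subset_card_eq m
  refine ⟨C, hc, fun h => hC h (by simp), fun h => hC h (by simp), fun b hb => ?_⟩
  have h5 := hC hb
  simp at h5
  omega

lemma tsE1 (hk : 2 ≤ k) (T : TsFacts k e c) (p : ℕ+) (hp : (p : ℕ) ≤ k) (z : X)
    (hz : c p z = 0) (hn : ‖z‖ ≤ 1 - (k:ℝ)⁻¹) (j : ℕ+) (hj : j ≠ p) (σ τ : ℝ)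
    (hσ : σ = 1 ∨ σ = -1) (hτ : τ = 1 ∨ τ = -1) :
    ‖σ • e p + z + τ • e j‖ = max 1 (1 + τ * c j z) := by
  obtain ⟨t0, t1, -⟩ := ts_inv_half hk
  have hsa : |σ| = 1 := by rcases hσ with h | h <;> simp [h]
  have hta : |τ| = 1 := by rcases hτ with h | h <;> simp [h]
  have hzj := abs_le.1 ((T.le j z).trans hn)
  have habs : |c j z + τ| = 1 + τ * c j z := by
    rcases hτ with rfl | rfl
    · rw [abs_of_nonneg] <;> linarith
    · rw [abs_of_nonpos] <;> linarith
  have hcp : c p (z + τ • e j) = 0 := by simp [T.ce, hz, hj]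
  apply le_antisymm
  · have h1 := T.linf (z + τ • e j) p σ hp
    rw [hcp, zero_add, hsa] at h1
    rw [show σ • e p + z + τ • e j = z + τ • e j + σ • e p by abel]
    refine h1.trans (max_le (le_max_left _ _) ?_)
    refine (T.add_le z j τ).trans (max_le ?_ ?_)
    · rw [habs]; exact le_max_right _ _
    · rw [hta]; exact le_max_of_le_left (by linarith)
  · apply max_le
    · have h1 := T.le p (σ • e p + z + τ • e j)
      rw [add_assoc, map_add, hcp] at h1
      simp [T.ce, hsa] at h1
      rwa [add_assoc]
    · have h1 := T.le j (σ • e p + z + τ • e j)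
      simp only [map_add, map_smul, T.ce, if_neg hj.symm, if_true, smul_eq_mul, mul_zero, mul_one,
        zero_add, habs] at h1
      exact h1

lemma tsE_unit (T : TsFacts k e c) (p : ℕ+) (hp : (p : ℕ) ≤ k) (z : X)
    (hz : c p z = 0) (hn : ‖z‖ ≤ 1) : ‖e p + z‖ = 1 := by
  apply le_antisymm
  · have h1 := T.linf z p 1 hp
    rw [hz, one_smul, add_comm] at h1
    refine h1.trans (max_le (by simp) hn)
  · have h1 := T.le p (e p + z)
    simpa [T.ce, hz] using h1

lemma ts_main (hk : 2 ≤ k) (T : TsFacts k e c)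
    (U : Metric.sphere (0 : X) 1 ≃ᵢ Metric.sphere (0 : X) 1) :
    ∃ (π : Equiv.Perm ℕ+) (ε : ℕ+ → ℝ), (∀ i, ε i = 1 ∨ ε i = -1) ∧
      (∀ i : ℕ+, k < (i : ℕ) → π i = i) ∧
      (∀ (i : ℕ+) (p : Metric.sphere (0 : X) 1), (p : X) = e i → (U p : X) = ε i • e (π i)) := by
  obtain ⟨t0, t1, t2⟩ := ts_inv_half hk
  obtain ⟨π, ε, hε, hU, hdist⟩ := tsC hk T U
  refine ⟨π, ε, hε, ?_, hU⟩
  have hS : ∀ z : Metric.sphere (0 : X) 1, ‖(z : X)‖ = 1 := fun z => by simp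
  have hεa : ∀ i, |ε i| = 1 := fun i => by rcases hε i with h | h <;> simp [h]
  have hC : ∀ (y : Metric.sphere (0 : X) 1) (i : ℕ+), c i (y : X) = 1 → c (π i) (U y : X) = ε i := by
    intro y i h
    rw [← ts_two hk T (hS y) i (Or.inl rfl), ← hdist i y 1 (Or.inl rfl), one_mul] at h
    exact (ts_two hk T (hS _) (π i) (hε i)).1 h
  -- low indices stay low
  have hD : ∀ p : ℕ+, (p : ℕ) ≤ k → (π p : ℕ) ≤ k := by
    intro p hp
    by_contra hcon
    push Not at hcon
    obtain ⟨C, hCc, hpC, -, hCb⟩ := ts_pick π k k p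
    have hcard : (insert p C).card = k + 1 := by rw [Finset.card_insert_of_notMem hpC, hCc]
    have hcy : ∀ b ∈ insert p C, c b (∑ b ∈ insert p C, (1:ℝ) • e b) = 1 := by
      intro b hb
      rw [ts_c_sum T _ (fun _ => 1), if_pos hb]
    have hy : ‖∑ b ∈ insert p C, (1:ℝ) • e b‖ = 1 := by
      apply le_antisymm
      · have := T.flat (insert p C) (fun _ => 1) k p le_rfl hcard (Finset.mem_insert_self _ _) hp
          (by simp)
        rwa [t2] at this
      · have := T.le p (∑ b ∈ insert p C, (1:ℝ) • e b)
        rw [hcy p (Finset.mem_insert_self _ _)] at this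
        simpa using this
    have h1 := T.ge (U ⟨∑ b ∈ insert p C, (1:ℝ) • e b, mem_sphere_zero_iff_norm.2 hy⟩ : X) ((insert p C).map π.toEmbedding) (by
      rw [Finset.card_map, hcard]
      intro b hb
      obtain ⟨a, ha, rfl⟩ := Finset.mem_map.1 hb
      rcases Finset.mem_insert.1 ha with rfl | ha
      · exact hcon
      · exact (hCb a ha).2)
    rw [hS, Finset.sum_map, Finset.sum_congr rfl (g := fun _ => (1:ℝ)) (fun b hb => by
      rw [Equiv.coe_toEmbedding, hC _ b (hcy b hb), hεa]), Finset.sum_const, hcard] at h1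
    simp at h1
    linarith
  have h1k : ((1:ℕ+) : ℕ) ≤ k := by
    change 1 ≤ k
    omega
  have hE : ∀ z : X, c 1 z = 0 → ‖z‖ ≤ 1 - (k:ℝ)⁻¹ →
      ∃ z' : X, ‖z'‖ = ‖z‖ ∧ c (π 1) z' = 0 ∧ ∀ j, j ≠ 1 → c (π j) z' = ε j * c j z := by
    intro z hz hn
    have hy := tsE_unit T 1 h1k z hz (by linarith)
    obtain ⟨y, hyz⟩ : ∃ y : Metric.sphere (0 : X) 1, (y : X) = e 1 + z :=
      ⟨⟨e 1 + z, by simpa using hy⟩, rfl⟩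
    have hcy : c (π 1) (U y : X) = ε 1 := hC y 1 (by rw [hyz]; simp [T.ce, hz])
    obtain ⟨z', hz'⟩ : ∃ z' : X, z' = (U y : X) - ε 1 • e (π 1) := ⟨_, rfl⟩
    have hUy : (U y : X) = ε 1 • e (π 1) + z' := by rw [hz']; abel
    have hz'0 : c (π 1) z' = 0 := by rw [hz']; simp [T.ce, hcy]
    have hz'n : ‖z'‖ = ‖z‖ := by
      have := hdist 1 y (-1) (Or.inr rfl)
      rw [hz', sub_eq_add_neg, ← neg_smul, ← neg_one_mul, this, hyz]
      congr 1
      module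
    refine ⟨z', hz'n, hz'0, fun j hj => ?_⟩
    have hk1 : ∀ τ : ℝ, (τ = 1 ∨ τ = -1) →
        max 1 (1 + τ * ε j * c (π j) z') = max 1 (1 + τ * c j z) := by
      intro τ hτ
      have hte : τ * ε j = 1 ∨ τ * ε j = -1 := by
        rcases hτ with h | h <;> rcases hε j with h' | h' <;> simp [h, h']
      rw [← tsE1 hk T (π 1) (hD 1 h1k) z' hz'0 (hz'n ▸ hn) (π j) (fun h => hj (π.injective h))
        (ε 1) (τ * ε j) (hε 1) hte, ← hUy, hdist j y τ hτ, hyz,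
        ← tsE1 hk T 1 h1k z hz hn j hj 1 τ (Or.inl rfl) hτ, one_smul]
    have ha := hk1 1 (Or.inl rfl)
    have hb := hk1 (-1) (Or.inr rfl)
    have hab : ε j * c (π j) z' = c j z := by
      generalize c (π j) z' = w at ha hb ⊢
      generalize c j z = v at ha hb ⊢
      have e1 : (1:ℝ) * ε j * w = ε j * w := by ring
      have e2 : (-1:ℝ) * ε j * w = -(ε j * w) := by ring
      rw [e1, one_mul] at ha
      rw [e2, neg_one_mul] at hb
      generalize ε j * w = w' at ha hb ⊢
      rcases max_cases 1 (1 + w') with h1 | h1 <;> rcases max_cases 1 (1 + v) with h2 | h2 <;>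
      rcases max_cases 1 (1 + -w') with h3 | h3 <;> rcases max_cases 1 (1 + -v) with h4 | h4 <;>
      linarith
    have hee : ε j * ε j = 1 := by rcases hε j with h | h <;> simp [h]
    linear_combination ε j * hab - c (π j) z' * hee
  have hE' : ∀ z : X, c 1 z = 0 →
      ∃ z' : X, ‖z'‖ = ‖z‖ ∧ c (π 1) z' = 0 ∧ ∀ j, j ≠ 1 → c (π j) z' = ε j * c j z := by
    intro z hz
    have hz0 := norm_nonneg z
    obtain ⟨s, hs⟩ : ∃ s : ℝ, s = 2 * (‖z‖ + 1) := ⟨_, rfl⟩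
    have hs0 : 0 < s := by linarith
    obtain ⟨z', h1, h2, h3⟩ := hE (s⁻¹ • z) (by simp [hz]) (by
      rw [norm_smul, norm_inv, Real.norm_of_nonneg hs0.le, inv_mul_le_iff₀ hs0, hs]
      nlinarith)
    refine ⟨s • z', ?_, by simp [h2], fun j hj => ?_⟩
    · rw [norm_smul, h1, norm_smul, norm_inv, mul_inv_cancel_left₀ (by simpa using hs0.ne')]
    · rw [map_smul, h3 j hj, map_smul, smul_eq_mul, smul_eq_mul]
      field_simp
  intro p hp
  have hp1 : p ≠ 1 := by
    rintro rfl
    omega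
  have setup : ∀ m : ℕ, ∃ (C : Finset ℕ+) (z' : X), p ∉ C ∧ C.card = m ∧
      (∀ b ∈ C, m < (b : ℕ) ∧ m < (π b : ℕ)) ∧
      ‖z'‖ = ‖∑ b ∈ insert p C, (1:ℝ) • e b‖ ∧
      (∀ b ∈ insert p C, c (π b) z' = ε b) ∧ ∀ b, b ∉ insert p C → c (π b) z' = 0 := by
    intro m
    obtain ⟨C, hCc, hpC, h1C, hCb⟩ := ts_pick π m m p
    have h1 : (1:ℕ+) ∉ insert p C := by
      simp [hp1.symm, h1C]
    obtain ⟨z', h2, h3, h4⟩ := hE' (∑ b ∈ insert p C, (1:ℝ) • e b) (by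
      rw [ts_c_sum T _ (fun _ => 1), if_neg h1])
    refine ⟨C, z', hpC, hCc, hCb, h2, ?_, ?_⟩
    · intro b hb
      rw [h4 b (fun h => h1 (h ▸ hb)), ts_c_sum T _ (fun _ => 1), if_pos hb, mul_one]
    · intro b hb
      by_cases hb1 : b = 1
      · rw [hb1, h3]
      · rw [h4 b hb1, ts_c_sum T _ (fun _ => 1), if_neg hb, mul_zero]
  apply PNat.coe_injective
  apply le_antisymm
  · by_contra hcon
    push Not at hcon
    obtain ⟨C, z', hpC, hCc, hCb, hn, hc1, -⟩ := setup p
    have hcard : (insert p C).card = p + 1 := by rw [Finset.card_insert_of_notMem hpC, hCc]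
    have h1 := T.flat (insert p C) (fun _ => 1) p p hp.le hcard (Finset.mem_insert_self _ _) le_rfl
      (by simp)
    have h2 := T.ge z' ((insert p C).map π.toEmbedding) (by
      rw [Finset.card_map, hcard]
      intro b hb
      obtain ⟨a, ha, rfl⟩ := Finset.mem_map.1 hb
      rcases Finset.mem_insert.1 ha with rfl | ha
      · exact hcon
      · exact (hCb a ha).2)
    rw [hn, Finset.sum_map, Finset.sum_congr rfl (g := fun _ => (1:ℝ)) (fun b hb => by
      rw [Equiv.coe_toEmbedding, hc1 b hb, hεa]), Finset.sum_const, hcard] at h2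
    simp only [nsmul_eq_mul, mul_one] at h2
    push_cast at h2
    linarith
  · by_contra hcon
    push Not at hcon
    obtain ⟨m, hm⟩ : ∃ m : ℕ, (p : ℕ) = m + 1 := ⟨p - 1, by have := p.pos; omega⟩
    obtain ⟨C, z', hpC, hCc, hCb, hn, hc1, hc0⟩ := setup m
    have hcard : (insert p C).card = m + 1 := by rw [Finset.card_insert_of_notMem hpC, hCc]
    have h1 := T.flat ((insert p C).map π.toEmbedding) (fun b => c b z') m (π p) (by omega)
      (by rw [Finset.card_map, hcard])
      (Finset.mem_map_of_mem _ (Finset.mem_insert_self _ _)) (by omega) (by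
        intro b hb
        obtain ⟨a, ha, rfl⟩ := Finset.mem_map.1 hb
        rw [Equiv.coe_toEmbedding, hc1 a ha, hεa])
    have hz' : ∑ b ∈ (insert p C).map π.toEmbedding, c b z' • e b = z' := by
      apply ts_ext T
      intro j
      rw [ts_c_sum T _ (fun b => c b z')]
      split_ifs with hj
      · rfl
      · obtain ⟨a, rfl⟩ := π.surjective j
        refine (hc0 a fun ha => hj ?_).symm
        exact Finset.mem_map_of_mem π.toEmbedding ha
    rw [hz', hn] at h1
    have h2 := T.ge (∑ b ∈ insert p C, (1:ℝ) • e b) (insert p C) (by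
      rw [hcard]
      intro b hb
      rcases Finset.mem_insert.1 hb with rfl | ha
      · exact hm.ge
      · exact (hCb b ha).1)
    rw [Finset.sum_congr rfl (g := fun _ => (1:ℝ)) (fun b hb => by
      rw [ts_c_sum T _ (fun _ => 1), if_pos hb, abs_one]), Finset.sum_const, hcard] at h2
    simp only [nsmul_eq_mul, mul_one] at h2
    push_cast at h2
    linarith

end TsStepC

/-- For integer `θ⁻¹ = k ≥ 2`, every surjective isometry of the unit
sphere of `T[θ, S₁]` maps `eᵢ` to `εᵢ e_{π i}`, where `π` is a permutation of
`{1, …, θ⁻¹}` fixing all larger indices. -/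
theorem tsirelson_sphere_isometry_basis_S1
    (θ : ℝ) (hθ0 : 0 < θ) (k : ℕ) (hk : 2 ≤ k) (hθk : θ⁻¹ = (k : ℝ))
    (X : Type*) [NormedAddCommGroup X] [NormedSpace ℝ X] (e : ℕ+ → X)
    (hX : IsTsirelsonSpace θ 1 X e)
    (U : Metric.sphere (0 : X) 1 → Metric.sphere (0 : X) 1)
    (hU : Isometry U) (hUsurj : Function.Surjective U) :
    ∃ (ε : ℕ+ → ℝ) (π : Equiv.Perm ℕ+),
      (∀ i, ε i = 1 ∨ ε i = -1) ∧
      (∀ i : ℕ+, k < (i : ℕ) → π i = i) ∧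
      ∀ (i : ℕ+) (h : e i ∈ Metric.sphere (0 : X) 1),
        (U ⟨e i, h⟩ : X) = ε i • e (π i) := by
  have hθ : θ = (k : ℝ)⁻¹ := by rw [← hθk, inv_inv]
  subst hθ
  obtain ⟨c, T⟩ := tsFacts_of hk hX
  obtain ⟨π, ε, h1, h2, h3⟩ := ts_main hk T
    (IsometryEquiv.mk (Equiv.ofBijective U ⟨hU.injective, hUsurj⟩) hU)
  exact ⟨ε, π, h1, h2, fun i h => h3 i ⟨e i, h⟩ rfl⟩
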